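/- Let RG be a region graph with exactly three terminal vertices (n = 3) satisfying Assumption 1, and suppose RG is terminal-separable. If RG is not feasible, then condition (C-IR) holds. -/

import Mathlib

namespace SumNetworksPaper

/-- `SuperReg Adj Θ R` : `R` belongs to the super region generated by `Θ`:
the smallest set containing `Θ` and containing every vertex whose parent set
is nonempty and entirely contained in the set. -/
inductive SuperReg {V : Type} (Adj : V → V → Prop) (Θ : Set V) : V → Prop
  | base {R : V} : R ∈ Θ → SuperReg Adj Θ R
  | step {R : V} : (∃ P, Adj P R) → (∀ P, Adj P R → SuperReg Adj Θ P) →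
      SuperReg Adj Θ R

/-- The super region `reg(Θ)` as a set. -/
def superReg {V : Type} (Adj : V → V → Prop) (Θ : Set V) : Set V :=
  {R | SuperReg Adj Θ R}

/-- A region graph: a finite directed acyclic simple graph with three source
vertices `S 0, S 1, S 2` (which have no parents) and `n` terminal vertices
`T 0, …, T (n-1)`, in which every non-source vertex has at least two parents.
`Adj P R` means that there is an edge from `P` to `R`, i.e. `P` is a parent of `R`. -/
structure RegionGraph (n : ℕ) where
  V : Type
  fintypeV : Fintype V
  Adj : V → V → Prop
  acyclic : ∀ v : V, ¬ Relation.TransGen Adj v v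
  S : Fin 3 → V
  T : Fin n → V
  S_inj : Function.Injective S
  T_inj : Function.Injective T
  source_no_parent : ∀ (i : Fin 3) (v : V), ¬ Adj v (S i)
  two_parents : ∀ v : V, (∀ i : Fin 3, v ≠ S i) →
    ∃ p q : V, p ≠ q ∧ Adj p v ∧ Adj q v

namespace RegionGraph

variable {n : ℕ} (G : RegionGraph n)

/-- The super region `reg(Θ)`. -/
def reg (Θ : Set G.V) : Set G.V := superReg G.Adj Θ

/-- `reg°(Θ) = reg(Θ) ∖ Θ`. -/
def regO (Θ : Set G.V) : Set G.V := G.reg Θ \ Θ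

/-- `reg(S_i, S_j)`. -/
def regPair (i j : Fin 3) : Set G.V := G.reg {G.S i, G.S j}

/-- `u → v` : there is a directed path from `u` to `v` (possibly trivial). -/
def Reaches (u v : G.V) : Prop := Relation.ReflTransGen G.Adj u v

/-- `Π = reg(S_1,S_2) ∪ reg(S_1,S_3) ∪ reg(S_2,S_3)`. -/
def bigPi : Set G.V := G.regPair 0 1 ∪ G.regPair 0 2 ∪ G.regPair 1 2

/-- `Ω_I` : vertices outside `Π` reaching exactly the terminals `T j`, `j ∈ I`. -/
def Omega (I : Set (Fin n)) : Set G.V :=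
  {R | R ∉ G.bigPi ∧ ∀ j : Fin n, j ∈ I ↔ G.Reaches R (G.T j)}

/-- `Λ_I` : vertices of `Π` having a child in `Ω_I`. -/
def Lambda (I : Set (Fin n)) : Set G.V :=
  {Q | Q ∈ G.bigPi ∧ ∃ R, G.Adj Q R ∧ R ∈ G.Omega I}

/-- Assumption 1: no terminal vertex lies in `Π`. -/
def Assumption1 : Prop := ∀ j : Fin n, G.T j ∉ G.bigPi

/-- Terminal-separability: `Ω_I = ∅` whenever `|I| > 1`. -/
def TerminalSeparable : Prop :=
  ∀ I : Set (Fin n), 1 < I.ncard → G.Omega I = ∅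

/-- A linear code of the region graph over `F`. -/
def IsLinearCode (F : Type) [Field F] (d : G.V → Fin 3 → F) : Prop :=
  (∀ i : Fin 3, d (G.S i) = Pi.single i 1) ∧
  ∀ v : G.V, (∀ i : Fin 3, v ≠ G.S i) →
    d v ∈ Submodule.span F (d '' {p | G.Adj p v})

/-- A linear solution: a linear code giving `ᾱ = (1,1,1)` at every terminal. -/
def IsLinearSolution (F : Type) [Field F] (d : G.V → Fin 3 → F) : Prop :=
  G.IsLinearCode F d ∧ ∀ j : Fin n, d (G.T j) = fun _ => 1

/-- Feasibility: existence of a linear solution over some finite field. -/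
def Feasible : Prop :=
  ∃ (F : Type) (_ : Field F) (_ : Fintype F) (d : G.V → Fin 3 → F),
    G.IsLinearSolution F d

/-- Conditions (1)–(3) on a family `{d_R : R ∈ Π}`. -/
def Conds123 (F : Type) [Field F] (d : G.V → Fin 3 → F) : Prop :=
  (∀ i : Fin 3, d (G.S i) = Pi.single i 1) ∧
  (∀ R ∈ G.bigPi, (∀ i : Fin 3, R ≠ G.S i) →
    d R ∈ Submodule.span F (d '' {p | G.Adj p R})) ∧
  ∀ j : Fin n, (fun _ => (1 : F)) ∈ Submodule.span F (d '' G.Lambda {j})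

/-- `I` is a partition of `Π` into nonempty classes. -/
def IsPartitionOfPi (I : Set (Set G.V)) : Prop :=
  (∀ Δ ∈ I, Δ.Nonempty ∧ Δ ⊆ G.bigPi) ∧
  ⋃₀ I = G.bigPi ∧
  ∀ Δ ∈ I, ∀ Δ' ∈ I, Δ ≠ Δ' → Δ ∩ Δ' = ∅

/-- The three sources lie in three distinct classes of the partition. -/
def SourcesSeparated (I : Set (Set G.V)) : Prop :=
  ∀ Δ ∈ I, ∀ i j : Fin 3, G.S i ∈ Δ → G.S j ∈ Δ → i = j

/-- `[S_i]_i = [S_i]_{i,j₁} ∪ [S_i]_{i,j₂}` for the class `Δ` of `S_i`. -/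
def srcSub (i : Fin 3) (Δ : Set G.V) : Set G.V :=
  Δ ∩ ⋃ (j : Fin 3) (_ : j ≠ i), G.regPair i j

/-- `X` is a subclass of the class `Δ`. -/
def IsSubclass (Δ X : Set G.V) : Prop :=
  (∃ i : Fin 3, G.S i ∈ Δ ∧
    (X = G.srcSub i Δ ∨
      ∃ j k : Fin 3, j ≠ k ∧ j ≠ i ∧ k ≠ i ∧ X = Δ ∩ G.regPair j k)) ∨
  ((∀ i : Fin 3, G.S i ∉ Δ) ∧ ∃ i j : Fin 3, i ≠ j ∧ X = Δ ∩ G.regPair i j)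

/-- The two classes `Δ'`, `Δ''` are connected. -/
def ClassesConnected (Δ' Δ'' : Set G.V) : Prop :=
  (∃ (j : Fin n) (X' X'' : Set G.V),
      G.IsSubclass Δ' X' ∧ G.IsSubclass Δ'' X'' ∧ G.Lambda {j} ⊆ X' ∪ X'') ∨
  ∃ i j : Fin 3, i ≠ j ∧
    (G.reg (Δ' ∩ G.regPair i j) ∩ G.reg (Δ'' ∩ G.regPair i j)).Nonempty

/-- The partition `I` of `Π` is compatible. -/
def Compatible (I : Set (Set G.V)) : Prop :=
  G.SourcesSeparated I ∧
  (∀ Δ' ∈ I, ∀ Δ'' ∈ I, Δ' ≠ Δ'' → ¬ G.ClassesConnected Δ' Δ'') ∧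
  ∀ (j : Fin n) (i₁ i₂ : Fin 3), i₁ ≠ i₂ →
    ∀ Δ₁ ∈ I, ∀ Δ₂ ∈ I, G.S i₁ ∈ Δ₁ → G.S i₂ ∈ Δ₂ →
      ¬ (G.Lambda {j} ⊆ G.srcSub i₁ Δ₁ ∪ G.srcSub i₂ Δ₂ ∪
          ⋃₀ {X : Set G.V | ∃ Δ ∈ I, (∀ i : Fin 3, G.S i ∉ Δ) ∧
                X = Δ ∩ G.regPair i₁ i₂})

/-- `I'` is obtained from `I` by merging two connected classes. -/
def IsContractionStep (I I' : Set (Set G.V)) : Prop :=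
  ∃ Δ' Δ'', Δ' ∈ I ∧ Δ'' ∈ I ∧ Δ' ≠ Δ'' ∧ G.ClassesConnected Δ' Δ'' ∧
    I' = insert (Δ' ∪ Δ'') (I \ {Δ', Δ''})

/-- The trivial partition of `Π` into singletons. -/
def trivialPartition : Set (Set G.V) := {X | ∃ R ∈ G.bigPi, X = {R}}

/-- `Ic` is a character partition of `Π`. -/
def IsCharacterPartition (Ic : Set (Set G.V)) : Prop :=
  ∃ (L : ℕ) (c : ℕ → Set (Set G.V)),
    c 0 = G.trivialPartition ∧ c L = Ic ∧
    (∀ ℓ < L, G.SourcesSeparated (c ℓ) ∧ G.IsContractionStep (c ℓ) (c (ℓ + 1))) ∧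
    ((∃ Δ ∈ Ic, ∃ i j : Fin 3, i ≠ j ∧ G.S i ∈ Δ ∧ G.S j ∈ Δ) ∨
      ∀ Δ' ∈ Ic, ∀ Δ'' ∈ Ic, Δ' ≠ Δ'' → ¬ G.ClassesConnected Δ' Δ'')

/-- Property (a): `d_{Q'} ∈ span{d_Q, ᾱ}` for all `Q, Q'` in the class `Δ`. -/
def PropertyA (F : Type) [Field F] (d : G.V → Fin 3 → F) (Δ : Set G.V) : Prop :=
  ∀ Q ∈ Δ, ∀ Q' ∈ Δ, d Q' ∈ Submodule.span F {d Q, fun _ => (1 : F)}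

end RegionGraph

/-- Condition (C-IR) for a region graph with three terminals. -/
def RegionGraph.CIR (G : RegionGraph 3) : Prop :=
  ∃ (σ τ : Equiv.Perm (Fin 3)) (P₁ P₂ : G.V),
    P₁ ∈ G.regO {G.S (σ 1), G.S (σ 2)} ∧
    P₂ ∈ G.regO {G.S (σ 0), G.S (σ 1)} ∧
    G.Lambda {τ 0} = {G.S (σ 0), P₁} ∧
    G.Lambda {τ 1} = {P₁, P₂} ∧
    G.Lambda {τ 2} ⊆ G.reg {G.S (σ 0), P₂} ∪ G.reg {G.S (σ 0), G.S (σ 2)}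

/-!
A code on `Π` is built from an identification of vertices. Modulo `ᾱ` the vectors of `F³` are points
of a projective line; choose generic points for the classes of the identification, with the basis
vectors at the sources, and give a vertex of `reg(S_i, S_j)` the representative of the point of its
class that lies in `span{α_i, α_j}`. This is consistent as soon as distinct sources stay apart and a
vertex all of whose parents are identified belongs to their class.

Such a code solves the problem at `T_j` when `Λ_j` contains two identified vertices with no common
plane `reg(S_i, S_k)`, or two unidentified vertices of one plane and a vertex off it, or three
unidentified vertices in the three planes. Only a two-element `Λ_j` forces an identification, so two
pairs with a common vertex are the only possible obstruction. Closing the union of two such pairs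
under forced identifications and analysing the third terminal yields a solution, unless the pairs
form a chain `{S_i, P₁}, {P₁, P₂}` and the third `Λ_j` is as in (C-IR).
-/

/-- The projection of `ι → R` onto the hyperplane `x k = 0` along the all-ones vector `ᾱ`. -/
def planeProj {ι : Type*} (R : Type*) [CommRing R] (k : ι) : (ι → R) →ₗ[R] ι → R :=
  LinearMap.id - (LinearMap.proj k).smulRight 1

section PlaneProj

variable {ι R : Type*} [CommRing R]

@[simp]
lemma planeProj_apply (k : ι) (x : ι → R) (i : ι) : planeProj R k x i = x i - x k := by
  simp [planeProj]

lemma planeProj_one (k : ι) : planeProj R k 1 = 0 := by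
  ext; simp

lemma planeProj_eq_self {k : ι} {x : ι → R} (hx : x k = 0) : planeProj R k x = x := by
  ext; simp [hx]

lemma planeProj_planeProj (k l : ι) (x : ι → R) :
    planeProj R k (planeProj R l x) = planeProj R k x := by
  ext; simp

lemma planeProj_single [DecidableEq ι] {i k : ι} (h : i ≠ k) :
    planeProj R k (Pi.single i 1) = Pi.single i 1 :=
  planeProj_eq_self (Pi.single_eq_of_ne h.symm 1)

lemma mem_span_planeProj_pair {a b : ι → R} (h : Submodule.span R {a, b, 1} = ⊤) {k : ι}
    {x : ι → R} (hx : x k = 0) : x ∈ Submodule.span R {planeProj R k a, planeProj R k b} := by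
  have hmem : planeProj R k x ∈ (Submodule.span R {a, b, 1}).map (planeProj R k) :=
    Submodule.mem_map_of_mem (h ▸ Submodule.mem_top)
  rw [planeProj_eq_self hx, Submodule.map_span, Set.image_insert_eq, Set.image_pair,
    planeProj_one, Set.insert_comm, Set.pair_comm, Set.insert_comm,
    Submodule.span_insert_zero] at hmem
  rwa [Set.pair_comm]

lemma one_mem_of_planeProj_mem {F : Type*} [Field F] {W : Submodule F (ι → F)} {z : ι → F}
    (hz : z ∈ W) {k : ι} (hk : z k ≠ 0) (h : planeProj F k z ∈ W) : 1 ∈ W := by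
  have hone : (1 : ι → F) = (z k)⁻¹ • (z - planeProj F k z) := by
    ext i
    simp [hk]
  rw [hone]
  exact W.smul_mem _ (W.sub_mem hz h)

end PlaneProj

lemma span_range_eq_top_of_det_ne_zero {ι F : Type*} [Fintype ι] [DecidableEq ι] [Field F]
    {A : Matrix ι ι F} (h : A.det ≠ 0) : Submodule.span F (Set.range A) = ⊤ :=
  (Matrix.linearIndependent_rows_of_det_ne_zero h).span_eq_top_of_card_eq_finrank' (by simp)

lemma eventually_intCast_zmod_ne_zero {z : ℤ} (hz : z ≠ 0) :
    ∀ᶠ p : ℕ in Filter.atTop, (z : ZMod p) ≠ 0 := by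
  filter_upwards [Filter.eventually_gt_atTop z.natAbs] with p hp h
  rw [ZMod.intCast_zmod_eq_zero_iff_dvd] at h
  exact hz (Int.eq_zero_of_abs_lt_dvd h (by rw [Int.abs_eq_natAbs]; exact_mod_cast hp))

/-- Vectors `w x` attached to labels `x : L`, three of which are the labels `s i` of the sources,
in general position modulo `ᾱ`. Modulo `ᾱ` the vectors are points of a projective line, and
`pair` says that distinct labels give distinct points; `triple` says that the projections of three
distinct points to the three coordinate planes are independent. -/
structure IsGeneric {L R : Type*} [CommRing R] (s : Fin 3 → L) (w : L → Fin 3 → R) : Prop where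
  source : ∀ i, w (s i) = Pi.single i 1
  pair : ∀ x y, x ≠ y → (Matrix.of ![w x, w y, 1]).det ≠ 0
  apart : ∀ x k l, k ≠ l → (∀ i, x = s i → i = k ∨ i = l) → w x k - w x l ≠ 0
  triple : ∀ x : Fin 3 → L, Function.Injective x → (∀ k i, x k = s i → i = k) →
    (Matrix.of fun k ↦ planeProj R k (w (x k))).det ≠ 0

section Generic

variable {L : Type*} {s : Fin 3 → L}

lemma IsGeneric.span_pair {F : Type*} [Field F] {w : L → Fin 3 → F} (hw : IsGeneric s w) {x y : L}
    (h : x ≠ y) : Submodule.span F {w x, w y, 1} = ⊤ := by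
  have hspan : Submodule.span F (Set.range ![w x, w y, 1]) = ⊤ :=
    span_range_eq_top_of_det_ne_zero (hw.pair x y h)
  rwa [Matrix.range_cons, Matrix.range_cons_cons_empty] at hspan

lemma exists_pos_four_dvd_two_mul_dvd (L : Type*) [Finite L] :
    ∃ t : L → ℤ, (∀ x, 0 < t x) ∧ (∀ x, 4 ∣ t x) ∧
      ∀ x y, x ≠ y → 2 * t x ∣ t y ∨ 2 * t y ∣ t x := by
  obtain ⟨n, ⟨e⟩⟩ := Finite.exists_equiv_fin L
  have hdvd : ∀ x y, e x < e y → 2 * (2 : ℤ) ^ ((e x : ℕ) + 2) ∣ 2 ^ ((e y : ℕ) + 2) := by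
    intro x y h
    rw [← pow_succ']
    exact pow_dvd_pow 2 (by omega)
  refine ⟨fun x ↦ 2 ^ ((e x : ℕ) + 2), fun x ↦ by positivity, fun x ↦ ⟨2 ^ (e x : ℕ), by ring⟩,
    fun x y hxy ↦ ?_⟩
  exact (lt_or_gt_of_ne (e.injective.ne hxy)).imp (hdvd x y) (hdvd y x)

/-- Integral weights: the standard basis vectors at the sources, and `(1, t x, 0)` at every other
label `x`. As points of the projective line `ℤ³ / ᾱ` the sources are `0`, `∞` and `1`, and `x` is
`t x`. -/
noncomputable def lineWeight (s : Fin 3 → L) (t : L → ℤ) : L → Fin 3 → ℤ :=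
  Function.extend s (fun i ↦ Pi.single i 1) (fun x ↦ ![1, t x, 0])

lemma lineWeight_source (hs : Function.Injective s) (t : L → ℤ) (i : Fin 3) :
    lineWeight s t (s i) = Pi.single i 1 :=
  hs.extend_apply ..

lemma lineWeight_of_ne (t : L → ℤ) {x : L} (hx : ∀ i, s i ≠ x) :
    lineWeight s t x = ![1, t x, 0] :=
  Function.extend_apply' _ _ _ fun ⟨i, hi⟩ ↦ hx i hi

lemma source_or_forall_ne (s : Fin 3 → L) (x : L) : (∃ i, s i = x) ∨ ∀ i, s i ≠ x := by
  simpa only [not_exists] using Classical.em (∃ i, s i = x)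

section LineWeight

variable {t : L → ℤ}

lemma lineWeight_pair (hs : Function.Injective s) (h4 : ∀ x, 4 ∣ t x) (hpos : ∀ x, 0 < t x)
    (hinj : Function.Injective t) {x y : L} (hxy : x ≠ y) :
    (Matrix.of ![lineWeight s t x, lineWeight s t y, 1]).det ≠ 0 := by
  have hx0 := hpos x
  have hy0 := hpos y
  have hx4 := h4 x
  have hy4 := h4 y
  rcases source_or_forall_ne s x with ⟨i, rfl⟩ | hx <;>
    rcases source_or_forall_ne s y with ⟨j, rfl⟩ | hy
  · rw [lineWeight_source hs, lineWeight_source hs, Matrix.det_fin_three]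
    fin_cases i <;> fin_cases j <;> simp at hxy ⊢
  · rw [lineWeight_source hs, lineWeight_of_ne t hy, Matrix.det_fin_three]
    fin_cases i <;> simp <;> omega
  · rw [lineWeight_of_ne t hx, lineWeight_source hs, Matrix.det_fin_three]
    fin_cases j <;> simp <;> omega
  · rw [lineWeight_of_ne t hx, lineWeight_of_ne t hy, Matrix.det_fin_three]
    simpa [sub_eq_zero] using hinj.ne hxy.symm

lemma lineWeight_apart (hs : Function.Injective s) (h4 : ∀ x, 4 ∣ t x) (hpos : ∀ x, 0 < t x)
    {x : L} {k l : Fin 3} (hkl : k ≠ l) (hx : ∀ i, x = s i → i = k ∨ i = l) :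
    lineWeight s t x k - lineWeight s t x l ≠ 0 := by
  rcases source_or_forall_ne s x with ⟨i, rfl⟩ | hxs
  · rw [lineWeight_source hs]
    rcases hx i rfl with rfl | rfl <;> simp [hkl, hkl.symm]
  · rw [lineWeight_of_ne t hxs]
    have hx0 := hpos x
    have hx4 := h4 x
    fin_cases k <;> fin_cases l <;> simp at hkl ⊢ <;> omega

lemma det_planeProj_fin_three {R : Type*} [CommRing R] (u : Fin 3 → Fin 3 → R) :
    (Matrix.of fun k ↦ planeProj R k (u k)).det =
      (u 0 1 - u 0 0) * (u 1 2 - u 1 1) * (u 2 0 - u 2 2) +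
        (u 0 2 - u 0 0) * (u 1 0 - u 1 1) * (u 2 1 - u 2 2) := by
  simp only [Matrix.det_fin_three, Matrix.of_apply, planeProj_apply]
  ring

lemma mul_one_sub_add_ne {a b c : ℤ} (ha : 4 ∣ a) (hb : 4 ∣ b) (hb0 : b ≠ 0)
    (hc : c = 1 ∨ 4 ∣ c ∧ c ≠ 0 ∧ (2 * b ∣ c ∨ 2 * c ∣ b)) : b * (1 - a + c) ≠ c := by
  intro h
  rcases hc with rfl | ⟨hc, hc0, ⟨q, hq⟩ | ⟨q, hq⟩⟩
  · exact absurd (hb.trans (Dvd.intro _ h)) (by decide)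
  · have : 1 - a + c = 2 * q := mul_left_cancel₀ hb0 (by linear_combination h + hq)
    omega
  · have : 2 * (q * (1 - a + c)) = 1 :=
      mul_left_cancel₀ hc0 (by linear_combination h - (1 - a + c) * hq)
    exact absurd (Dvd.intro _ this) (by decide)

lemma lineWeight_triple (hs : Function.Injective s) (h4 : ∀ x, 4 ∣ t x) (hpos : ∀ x, 0 < t x)
    (h2 : ∀ x y, x ≠ y → 2 * t x ∣ t y ∨ 2 * t y ∣ t x)
    {x : Fin 3 → L} (hx : Function.Injective x) (hxs : ∀ k i, x k = s i → i = k) :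
    (Matrix.of fun k ↦ planeProj ℤ k (lineWeight s t (x k))).det ≠ 0 := by
  have hcases : ∀ k, lineWeight s t (x k) = Pi.single k 1 ∨
      lineWeight s t (x k) = ![1, t (x k), 0] := by
    intro k
    rcases source_or_forall_ne s (x k) with ⟨i, hi⟩ | hk
    · obtain rfl := hxs k i hi.symm
      exact .inl (hi ▸ lineWeight_source hs t i)
    · exact .inr (lineWeight_of_ne t hk)
  rw [det_planeProj_fin_three]
  set u : Fin 3 → Fin 3 → ℤ := fun k ↦ lineWeight s t (x k) with hu
  obtain ⟨a, ha4, ha, ha'⟩ : ∃ a : ℤ, 4 ∣ a ∧ u 0 1 - u 0 0 = a - 1 ∧ u 0 2 - u 0 0 = -1 := by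
    rcases hcases 0 with h | h
    · exact ⟨0, by simp [hu, h]⟩
    · exact ⟨t (x 0), h4 _, by simp [hu, h]⟩
  obtain ⟨c, ε, hc, hε, hc1, hc2⟩ : ∃ c ε : ℤ, (c = 1 ∨ c = t (x 2)) ∧ ε ≠ 0 ∧
      u 2 0 - u 2 2 = ε ∧ u 2 1 - u 2 2 = ε * c := by
    rcases hcases 2 with h | h
    · exact ⟨1, -1, .inl rfl, by simp [hu, h]⟩
    · exact ⟨t (x 2), 1, .inr rfl, by simp [hu, h]⟩
  rw [ha, ha', hc1, hc2]
  rcases hcases 1 with h | h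
  · have hα : u 1 2 - u 1 1 = -1 := by simp [hu, h]
    have hβ : u 1 0 - u 1 1 = -1 := by simp [hu, h]
    rw [hα, hβ, show (a - 1) * -1 * ε + -1 * -1 * (ε * c) = ε * (1 - a + c) by ring]
    have h42 := h4 (x 2)
    exact mul_ne_zero hε (by omega)
  · have hα : u 1 2 - u 1 1 = -t (x 1) := by simp [hu, h]
    have hβ : u 1 0 - u 1 1 = 1 - t (x 1) := by simp [hu, h]
    rw [hα, hβ, show (a - 1) * -t (x 1) * ε + -1 * (1 - t (x 1)) * (ε * c) =
      ε * (t (x 1) * (1 - a + c) - c) by ring]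
    refine mul_ne_zero hε (sub_ne_zero.2 (mul_one_sub_add_ne ha4 (h4 _) (hpos _).ne' ?_))
    refine hc.imp_right fun h ↦ ?_
    subst h
    exact ⟨h4 _, (hpos _).ne', h2 _ _ (hx.ne (by decide))⟩

lemma exists_isGeneric_int [Finite L] (hs : Function.Injective s) :
    ∃ w : L → Fin 3 → ℤ, IsGeneric s w := by
  obtain ⟨t, hpos, h4, h2⟩ := exists_pos_four_dvd_two_mul_dvd L
  have hinj : Function.Injective t := by
    intro x y hxy
    by_contra hne
    have hy := hpos y
    rcases h2 x y hne with h | h <;> rw [hxy] at h <;>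
      exact absurd (Int.le_of_dvd hy h) (by omega)
  exact ⟨lineWeight s t, lineWeight_source hs t, fun _ _ ↦ lineWeight_pair hs h4 hpos hinj,
    fun _ _ _ ↦ lineWeight_apart hs h4 hpos, fun _ ↦ lineWeight_triple hs h4 hpos h2⟩

end LineWeight

lemma IsGeneric.eventually_zmod [Finite L] {w : L → Fin 3 → ℤ} (hw : IsGeneric s w) :
    ∀ᶠ p : ℕ in Filter.atTop, IsGeneric s fun x i ↦ (w x i : ZMod p) := by
  have hdet : ∀ {A : Matrix (Fin 3) (Fin 3) ℤ}, A.det ≠ 0 → ∀ᶠ p : ℕ in Filter.atTop,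
      (A.map (Int.cast : ℤ → ZMod p)).det ≠ 0 := fun h ↦ by
    simpa only [Int.cast_det] using eventually_intCast_zmod_ne_zero h
  have hpair := Filter.eventually_all.2 fun x ↦ Filter.eventually_all.2 fun y ↦
    Filter.eventually_all.2 fun h ↦ hdet (hw.pair x y h)
  have hapart := Filter.eventually_all.2 fun x ↦ Filter.eventually_all.2 fun k ↦
    Filter.eventually_all.2 fun l ↦ Filter.eventually_all.2 fun h ↦ Filter.eventually_all.2
      fun hx ↦ eventually_intCast_zmod_ne_zero (hw.apart x k l h hx)
  have htriple := Filter.eventually_all.2 fun x ↦ Filter.eventually_all.2 fun h ↦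
    Filter.eventually_all.2 fun hx ↦ hdet (hw.triple x h hx)
  filter_upwards [hpair, hapart, htriple] with p hpair hapart htriple
  refine ⟨fun i ↦ ?_, fun x y h ↦ ?_, fun x k l h hx ↦ ?_, fun x h hx ↦ ?_⟩
  · ext j
    rcases eq_or_ne j i with rfl | h <;> simp [hw.source, *]
  · convert hpair x y h using 2
    ext i j
    fin_cases i <;> simp
  · simpa using hapart x k l h hx
  · convert htriple x h hx using 2
    ext i j
    simp

lemma exists_isGeneric_field [Finite L] (hs : Function.Injective s) :
    ∃ (F : Type) (_ : Field F) (_ : Fintype F) (w : L → Fin 3 → F), IsGeneric s w := by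
  obtain ⟨w, hw⟩ := exists_isGeneric_int hs
  obtain ⟨p, hp, hgen⟩ := ((Nat.frequently_atTop_iff_infinite.2
    Nat.infinite_setOfPred_prime).and_eventually hw.eventually_zmod).exists
  have : Fact p.Prime := ⟨hp⟩
  exact ⟨ZMod p, inferInstance, inferInstance, _, hgen⟩

end Generic

lemma exists_update_mem_span {V R M : Type*} [DecidableEq V] [Semiring R] [AddCommMonoid M]
    [Module R M] {d : V → M} {A B P : Set V} {v : V} {a : M}
    (ha : a ∈ Submodule.span R (d '' (A ∪ P))) (hAB : A ⊆ B) (hvA : v ∉ A) (hvB : v ∈ B) :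
    ∃ y ∈ Submodule.span R (d '' P), a ∈ Submodule.span R (Function.update d v y '' B) := by
  rw [Set.image_union, Submodule.span_union, Submodule.mem_sup] at ha
  obtain ⟨x, hx, y, hy, rfl⟩ := ha
  refine ⟨y, hy, add_mem (Submodule.span_mono ?_ hx)
    (Submodule.subset_span ⟨v, hvB, Function.update_self ..⟩)⟩
  rintro _ ⟨p, hp, rfl⟩
  exact ⟨p, hAB hp, Function.update_of_ne (ne_of_mem_of_not_mem hp hvA) ..⟩

/-- Writing the target `a` as a combination of inherited vectors, a vertex of `Ω` all of whose
parents lie outside `Ω` receives the part of the combination carried by its own parents. -/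
lemma exists_code_extension {V R M : Type*} [Semiring R] [AddCommMonoid M] [Module R M]
    {Adj : V → V → Prop} (hwf : WellFounded Adj) {t : V} {Ω : Finset V}
    (hchild : ∀ v ∈ Ω, ∃ w, (w = t ∨ w ∈ Ω) ∧ Adj v w) {d : V → M} {a : M}
    (ha : a ∈ Submodule.span R (d '' {p | p ∉ Ω ∧ ∃ w, (w = t ∨ w ∈ Ω) ∧ Adj p w})) :
    ∃ e : V → M, (∀ v ∉ Ω, e v = d v) ∧ a ∈ Submodule.span R (e '' {p | Adj p t}) ∧
      ∀ v ∈ Ω, e v ∈ Submodule.span R (e '' {p | Adj p v}) := by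
  classical
  induction Ω using Finset.strongInduction generalizing d with
  | H Ω ih =>
    rcases Ω.eq_empty_or_nonempty with rfl | hΩ
    · exact ⟨d, by simpa using ha⟩
    obtain ⟨v, hv : v ∈ Ω, hmin⟩ := hwf.has_min (Ω : Set V) hΩ
    have herase : ∀ u, ¬ Adj u v → (∃ w, (w = t ∨ w ∈ Ω) ∧ Adj u w) →
        ∃ w, (w = t ∨ w ∈ Ω.erase v) ∧ Adj u w := by
      rintro u huv ⟨w, hw, huw⟩
      exact ⟨w, hw.imp_right (Finset.mem_erase.2 ⟨fun h ↦ huv (h ▸ huw), ·⟩), huw⟩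
    have hsub : {p | p ∉ Ω ∧ ∃ w, (w = t ∨ w ∈ Ω) ∧ Adj p w} ⊆
        {p | p ∉ Ω ∧ ∃ w, (w = t ∨ w ∈ Ω.erase v) ∧ Adj p w} ∪ {p | Adj p v} :=
      fun p hp ↦ or_iff_not_imp_right.2 fun hpv ↦ ⟨hp.1, herase p hpv hp.2⟩
    obtain ⟨y, hy, hya⟩ := exists_update_mem_span (v := v)
      (B := {p | p ∉ Ω.erase v ∧ ∃ w, (w = t ∨ w ∈ Ω.erase v) ∧ Adj p w})
      (Submodule.span_mono (Set.image_mono hsub) ha)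
      (fun p hp ↦ ⟨fun h ↦ hp.1 (Finset.mem_of_mem_erase h), hp.2⟩) (fun h ↦ h.1 hv)
      ⟨Finset.notMem_erase v Ω, herase v (hmin v hv) (hchild v hv)⟩
    obtain ⟨e, he, het, hcode⟩ := ih (Ω.erase v) (Finset.erase_ssubset hv)
      (fun u hu ↦ herase u (hmin u (Finset.mem_of_mem_erase hu))
        (hchild u (Finset.mem_of_mem_erase hu))) hya
    have hev : e v = y := (he v (Finset.notMem_erase v Ω)).trans (Function.update_self ..)
    have heΩ : ∀ p ∉ Ω, e p = d p := fun p hp ↦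
      (he p fun h ↦ hp (Finset.mem_of_mem_erase h)).trans
        (Function.update_of_ne (ne_of_mem_of_not_mem hv hp).symm ..)
    refine ⟨e, heΩ, het, fun u hu ↦ ?_⟩
    rcases eq_or_ne u v with rfl | huv
    · have himage : e '' {p | Adj p u} = d '' {p | Adj p u} :=
        Set.image_congr fun p hp ↦ heΩ p fun h ↦ hmin p h hp
      rwa [hev, himage]
    · exact hcode u (Finset.mem_erase.2 ⟨huv, hu⟩)

lemma exists_perm_fin_three {x y z : Fin 3} (hxy : x ≠ y) (hxz : x ≠ z) (hyz : y ≠ z) :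
    ∃ σ : Equiv.Perm (Fin 3), σ 0 = x ∧ σ 1 = y ∧ σ 2 = z := by
  have hinj : Function.Injective ![x, y, z] := by
    intro i j
    fin_cases i <;> fin_cases j <;> simp [hxy, hxz, hyz, hxy.symm, hxz.symm, hyz.symm]
  exact ⟨.ofBijective _ (Finite.injective_iff_bijective.1 hinj), rfl, rfl, rfl⟩

lemma exists_pairs_eq_of_not_disjoint {α : Type*} {X Y X' Y' : α}
    (hne : ({X, Y} : Set α) ≠ {X', Y'}) (h : ¬ Disjoint ({X, Y} : Set α) {X', Y'}) :
    ∃ Q P R, ({X, Y} : Set α) = {Q, P} ∧ ({X', Y'} : Set α) = {Q, R} ∧ P ≠ R := by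
  have hshare : ∀ {A : Set α} {X Y Q : α}, A = {X, Y} → Q ∈ A → ∃ P, A = {Q, P} := by
    rintro _ X Y Q rfl (rfl | rfl)
    exacts [⟨Y, rfl⟩, ⟨X, Set.pair_comm _ _⟩]
  obtain ⟨Q, hQ, hQ'⟩ := Set.not_disjoint_iff.1 h
  obtain ⟨P, hP⟩ := hshare rfl hQ
  obtain ⟨R, hR⟩ := hshare rfl hQ'
  exact ⟨Q, P, R, hP, hR, fun hPR ↦ hne (hP.trans (hPR ▸ hR.symm))⟩

namespace RegionGraph

variable {n : ℕ} {G : RegionGraph n}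

lemma wellFounded_adj (G : RegionGraph n) : WellFounded G.Adj := by
  have := G.fintypeV
  have : IsStrictOrder G.V (Relation.TransGen G.Adj) :=
    { irrefl := G.acyclic, trans := fun _ _ _ ↦ .trans }
  exact Subrelation.wf .single (Finite.wellFounded_of_trans_of_irrefl (Relation.TransGen G.Adj))

section Reg

variable {Θ Θ' C : Set G.V} {P R : G.V}

lemma subset_reg (Θ : Set G.V) : Θ ⊆ G.reg Θ := fun _ ↦ .base

lemma mem_reg_of_parents (hR : ∃ P, G.Adj P R) (h : ∀ P, G.Adj P R → P ∈ G.reg Θ) :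
    R ∈ G.reg Θ :=
  SuperReg.step hR h

lemma reg_subset (hΘ : Θ ⊆ C)
    (hC : ∀ R, (∃ P, G.Adj P R) → (∀ P, G.Adj P R → P ∈ C) → R ∈ C) : G.reg Θ ⊆ C := by
  intro R hR
  induction hR with
  | base h => exact hΘ h
  | step h _ ih => exact hC _ h ih

lemma reg_subset_reg (h : Θ ⊆ G.reg Θ') : G.reg Θ ⊆ G.reg Θ' :=
  reg_subset h fun _ ↦ mem_reg_of_parents

lemma reg_mono (h : Θ ⊆ Θ') : G.reg Θ ⊆ G.reg Θ' :=
  reg_subset_reg (h.trans (subset_reg Θ'))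

lemma parent_mem_reg (hR : R ∈ G.reg Θ) (hΘ : R ∉ Θ) (hP : G.Adj P R) : P ∈ G.reg Θ := by
  cases hR with
  | base h => exact absurd h hΘ
  | step _ h => exact h P hP

lemma ne_source_of_adj (h : G.Adj P R) (i : Fin 3) : R ≠ G.S i :=
  fun hi ↦ G.source_no_parent i P (hi ▸ h)

lemma exists_adj_of_forall_ne_source (h : ∀ i, R ≠ G.S i) : ∃ P, G.Adj P R :=
  let ⟨P, _, _, hP, _⟩ := G.two_parents R h
  ⟨P, hP⟩

lemma source_mem_reg_iff {i : Fin 3} : G.S i ∈ G.reg Θ ↔ G.S i ∈ Θ := by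
  refine ⟨fun h ↦ ?_, fun h ↦ subset_reg Θ h⟩
  cases h with
  | base h => exact h
  | step h _ => exact absurd h.choose_spec (G.source_no_parent i _)

lemma reg_eq_of_subsingleton (h : Θ.Subsingleton) : G.reg Θ = Θ := by
  refine (reg_subset subset_rfl fun R ⟨P, hP⟩ hΘ ↦ ?_).antisymm (subset_reg Θ)
  obtain ⟨P, Q, hne, hP, hQ⟩ := G.two_parents R (ne_source_of_adj hP)
  exact absurd (h (hΘ P hP) (hΘ Q hQ)) hne

end Reg

/-- The region `reg(S_i, S_j)` with `{i, j, k} = {1, 2, 3}`, indexed by the missing source `k`: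
the vertices at which every linear code takes values in the coordinate plane `x k = 0`. -/
def plane (G : RegionGraph n) (k : Fin 3) : Set G.V := G.reg (G.S '' {k}ᶜ)

section Plane

variable {i j k l : Fin 3} {Θ : Set G.V} {P R : G.V}

@[simp]
lemma source_mem_plane_iff : G.S i ∈ G.plane k ↔ i ≠ k := by
  rw [plane, source_mem_reg_iff, G.S_inj.mem_set_image, Set.mem_compl_singleton_iff]

lemma reg_subset_plane (h : Θ ⊆ G.plane k) : G.reg Θ ⊆ G.plane k :=
  reg_subset_reg h

lemma parent_mem_plane (hR : R ∈ G.plane k) (hP : G.Adj P R) : P ∈ G.plane k :=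
  parent_mem_reg hR (by rintro ⟨i, -, hi⟩; exact ne_source_of_adj hP i hi.symm) hP

lemma exists_source_of_mem_plane_inter (hk : R ∈ G.plane k) (hl : R ∈ G.plane l) (hkl : k ≠ l) :
    ∃ i, R = G.S i := by
  induction R using G.wellFounded_adj.induction with
  | _ R ih =>
    by_contra! hR
    obtain ⟨P, Q, hne, hP, hQ⟩ := G.two_parents R hR
    have hPk := parent_mem_plane hk hP
    have hPl := parent_mem_plane hl hP
    have hQk := parent_mem_plane hk hQ
    have hQl := parent_mem_plane hl hQ
    obtain ⟨i, rfl⟩ := ih P hP hPk hPl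
    obtain ⟨j, rfl⟩ := ih Q hQ hQk hQl
    rw [source_mem_plane_iff] at hPk hPl hQk hQl
    exact hne (congrArg G.S (by omega))

lemma plane_unique (hR : ∀ i, R ≠ G.S i) (hk : R ∈ G.plane k) (hl : R ∈ G.plane l) : k = l := by
  by_contra hkl
  obtain ⟨i, hi⟩ := exists_source_of_mem_plane_inter hk hl hkl
  exact hR i hi

lemma regPair_eq_plane (hik : i ≠ k) (hjk : j ≠ k) (hij : i ≠ j) :
    G.regPair i j = G.plane k := by
  have : ({k}ᶜ : Set (Fin 3)) = {i, j} := by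
    ext l
    simp only [Set.mem_compl_iff, Set.mem_singleton_iff, Set.mem_insert_iff]
    omega
  rw [plane, this, Set.image_pair, regPair]

lemma mem_bigPi_iff : R ∈ G.bigPi ↔ ∃ k, R ∈ G.plane k := by
  rw [bigPi, regPair_eq_plane (k := 2), regPair_eq_plane (k := 1), regPair_eq_plane (k := 0),
    Fin.exists_fin_succ, Fin.exists_fin_two, Set.mem_union, Set.mem_union] <;> grind

lemma plane_subset_bigPi (k : Fin 3) : G.plane k ⊆ G.bigPi :=
  fun _ h ↦ mem_bigPi_iff.2 ⟨k, h⟩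

lemma source_mem_bigPi (i : Fin 3) : G.S i ∈ G.bigPi :=
  mem_bigPi_iff.2 ((exists_ne i).imp fun _ h ↦ source_mem_plane_iff.2 h.symm)

end Plane

section Omega

variable {j : Fin n} {P R : G.V}

lemma mem_Omega_singleton_iff (hTS : G.TerminalSeparable) :
    R ∈ G.Omega {j} ↔ R ∉ G.bigPi ∧ G.Reaches R (G.T j) := by
  refine ⟨fun h ↦ ⟨h.1, (h.2 j).1 rfl⟩, fun ⟨hPi, hj⟩ ↦ ⟨hPi, fun i ↦ ⟨?_, fun hi ↦ ?_⟩⟩⟩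
  · rintro rfl
    exact hj
  · by_contra hij
    have hcard : 1 < {i | G.Reaches R (G.T i)}.ncard :=
      (Set.one_lt_ncard (Set.toFinite _)).2 ⟨i, hi, j, hj, hij⟩
    exact (hTS _ hcard).subset (⟨hPi, fun _ ↦ Iff.rfl⟩ : R ∈ G.Omega {i | G.Reaches R (G.T i)})

lemma T_mem_Omega (hA : G.Assumption1) (hTS : G.TerminalSeparable) (j : Fin n) :
    G.T j ∈ G.Omega {j} :=
  (mem_Omega_singleton_iff hTS).2 ⟨hA j, .refl⟩

lemma mem_Omega_of_adj (hTS : G.TerminalSeparable) (hR : R ∈ G.Omega {j}) (hP : G.Adj P R)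
    (hPi : P ∉ G.bigPi) : P ∈ G.Omega {j} :=
  (mem_Omega_singleton_iff hTS).2 ⟨hPi, .head hP ((hR.2 j).1 rfl)⟩

lemma ne_source_of_mem_Omega {I : Set (Fin n)} (hR : R ∈ G.Omega I) (i : Fin 3) : R ≠ G.S i :=
  fun h ↦ hR.1 (h ▸ source_mem_bigPi i)

lemma mem_Lambda_or_Omega_of_adj (hTS : G.TerminalSeparable) (hR : R ∈ G.Omega {j})
    (hP : G.Adj P R) : P ∈ G.Lambda {j} ∨ P ∈ G.Omega {j} := by
  by_cases hPi : P ∈ G.bigPi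
  · exact .inl ⟨hPi, R, hP, hR⟩
  · exact .inr (mem_Omega_of_adj hTS hR hP hPi)

lemma Lambda_subset_bigPi (j : Fin n) : G.Lambda {j} ⊆ G.bigPi := fun _ h ↦ h.1

lemma not_Lambda_subset_plane (hA : G.Assumption1) (hTS : G.TerminalSeparable) (j : Fin n)
    (k : Fin 3) : ¬ G.Lambda {j} ⊆ G.plane k := by
  intro hΛ
  suffices hΩ : G.Omega {j} ⊆ G.plane k from
    hA j (plane_subset_bigPi k (hΩ (T_mem_Omega hA hTS j)))
  intro R hR
  induction R using G.wellFounded_adj.induction with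
  | _ R ih =>
    refine mem_reg_of_parents (exists_adj_of_forall_ne_source (ne_source_of_mem_Omega hR))
      fun P hP ↦ ?_
    exact (mem_Lambda_or_Omega_of_adj hTS hR hP).elim (fun h ↦ hΛ h) (ih P hP)

end Omega

section Extension

variable {j : Fin n}

lemma notMem_bigPi_of_adj {v w : G.V} (hv : v ∉ G.bigPi) (h : G.Adj v w) : w ∉ G.bigPi := by
  intro hw
  obtain ⟨k, hk⟩ := mem_bigPi_iff.1 hw
  exact hv (plane_subset_bigPi k (parent_mem_plane hk h))

lemma exists_child_mem_Omega (hTS : G.TerminalSeparable) {v : G.V} (hv : v ∈ G.Omega {j})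
    (hvT : v ≠ G.T j) : ∃ w ∈ G.Omega {j}, G.Adj v w := by
  obtain hvj | ⟨w, hvw, hwj⟩ := ((hv.2 j).1 rfl).cases_head
  · exact absurd hvj hvT
  · exact ⟨w, (mem_Omega_singleton_iff hTS).2 ⟨notMem_bigPi_of_adj hv.1 hvw, hwj⟩, hvw⟩

lemma exists_code_on_Omega (hA : G.Assumption1) (hTS : G.TerminalSeparable) {F : Type*} [Field F]
    {d : G.V → Fin 3 → F} {a : Fin 3 → F} (ha : a ∈ Submodule.span F (d '' G.Lambda {j})) :
    ∃ e : G.V → Fin 3 → F, (∀ v ∈ G.bigPi, e v = d v) ∧ e (G.T j) = a ∧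
      ∀ v ∈ G.Omega {j}, e v ∈ Submodule.span F (e '' {p | G.Adj p v}) := by
  classical
  have := G.fintypeV
  set Ω := (G.Omega {j}).toFinset.erase (G.T j)
  have hΩ : ∀ w, w = G.T j ∨ w ∈ Ω ↔ w ∈ G.Omega {j} := fun w ↦ by
    by_cases hw : w = G.T j
    · simp [hw, T_mem_Omega hA hTS]
    · simp [Ω, hw]
  obtain ⟨e, he, hT, hcode⟩ := exists_code_extension G.wellFounded_adj (t := G.T j) (Ω := Ω)
    (d := Function.update d (G.T j) a) (a := a)
    (fun v hv ↦ by
      simp only [hΩ]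
      exact exists_child_mem_Omega hTS ((hΩ v).1 (.inr hv)) (Finset.ne_of_mem_erase hv))
    (by
      refine Submodule.span_mono ?_ ha
      rintro _ ⟨p, ⟨hp, w, hpw, hw⟩, rfl⟩
      exact ⟨p, ⟨fun h ↦ ((hΩ p).1 (.inr h)).1 hp, w, (hΩ w).2 hw, hpw⟩,
        Function.update_of_ne (ne_of_mem_of_not_mem hp (hA j)) ..⟩)
  have heT : e (G.T j) = a := (he _ (Finset.notMem_erase _ _)).trans (Function.update_self ..)
  refine ⟨e, fun v hv ↦ ?_, heT, fun v hv ↦ ?_⟩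
  · rw [he v fun h ↦ ((hΩ v).1 (.inr h)).1 hv,
      Function.update_of_ne (ne_of_mem_of_not_mem hv (hA j))]
  · rcases (hΩ v).2 hv with rfl | hv
    · rwa [heT]
    · exact hcode v hv

theorem feasible_of_conds123 (hA : G.Assumption1) (hTS : G.TerminalSeparable) {F : Type}
    [Field F] [Finite F] {d : G.V → Fin 3 → F} (hd : G.Conds123 F d) : G.Feasible := by
  classical
  obtain ⟨hsource, hPi, hΛ⟩ := hd
  choose e hePi heT hecode using fun j ↦ exists_code_on_Omega hA hTS (hΛ j)
  let d' : G.V → Fin 3 → F := fun v ↦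
    if v ∈ G.bigPi then d v else if h : ∃ j, v ∈ G.Omega {j} then e h.choose v else 0
  have hd'Pi : ∀ v ∈ G.bigPi, d' v = d v := fun v hv ↦ if_pos hv
  have hd'Ω : ∀ j, ∀ v ∈ G.Omega {j}, d' v = e j v := by
    intro j v hv
    have hex : ∃ j, v ∈ G.Omega {j} := ⟨j, hv⟩
    have hj : hex.choose = j := (hv.2 _).2 ((hex.choose_spec.2 _).1 rfl)
    simp [d', hv.1, hex, hj]
  refine ⟨F, inferInstance, Fintype.ofFinite F, d', ⟨fun i ↦ ?_, fun v hv ↦ ?_⟩, fun j ↦ ?_⟩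
  · rw [hd'Pi _ (source_mem_bigPi i), hsource]
  · by_cases hvPi : v ∈ G.bigPi
    · obtain ⟨k, hk⟩ := mem_bigPi_iff.1 hvPi
      have himage : d' '' {p | G.Adj p v} = d '' {p | G.Adj p v} := Set.image_congr fun p hp ↦
        hd'Pi p (plane_subset_bigPi k (parent_mem_plane hk hp))
      rw [hd'Pi v hvPi, himage]
      exact hPi v hvPi hv
    by_cases hvΩ : ∃ j, v ∈ G.Omega {j}
    · obtain ⟨j, hj⟩ := hvΩ
      have himage : d' '' {p | G.Adj p v} = e j '' {p | G.Adj p v} := Set.image_congr fun p hp ↦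
        (mem_Lambda_or_Omega_of_adj hTS hj hp).elim
          (fun h ↦ (hd'Pi p h.1).trans (hePi j p h.1).symm) (hd'Ω j p)
      rw [hd'Ω j v hj, himage]
      exact hecode j v hj
    · simp [d', hvPi, hvΩ]
  · rw [hd'Ω j _ (T_mem_Omega hA hTS j), heT]

end Extension

section Decoding

variable {r : Setoid G.V} {k : Fin 3} {L : Set G.V}

/-- An identification of vertices that can be realised by a code on `Π` in which the vector of a
vertex of `plane k` is the projection to `x k = 0` of a generic vector depending on its class
only: sources are not identified, and a vertex whose parents are all identified belongs to their
class. -/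
structure IsPlaneCongruence (G : RegionGraph n) (r : Setoid G.V) : Prop where
  source : ∀ i j, r (G.S i) (G.S j) → i = j
  parents : ∀ k, ∀ R ∈ G.plane k, (∀ i, R ≠ G.S i) →
    (∀ P Q, G.Adj P R → G.Adj Q R → r P Q) → ∃ P, G.Adj P R ∧ r P R

/-- `Z` lies outside `plane k` and is identified with no source that would force the vector at `Z`
into the coordinate plane `x k = 0`. -/
def IsTransversal (G : RegionGraph n) (r : Setoid G.V) (k : Fin 3) (Z : G.V) : Prop :=
  Z ∉ G.plane k ∧ ∀ i, r Z (G.S i) → i = k ∨ Z ∈ G.plane i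

/-- The three ways in which the vectors at the vertices of `L` are shown to span `ᾱ`. -/
inductive Decodes (G : RegionGraph n) (r : Setoid G.V) (L : Set G.V) : Prop
  | related {k X Z} : X ∈ L → X ∈ G.plane k → Z ∈ L → G.IsTransversal r k Z → r X Z → Decodes G r L
  | coplanar {k X Y Z} : X ∈ L → X ∈ G.plane k → Y ∈ L → Y ∈ G.plane k → ¬ r X Y →
      Z ∈ L → G.IsTransversal r k Z → Decodes G r L
  | rainbow {X : Fin 3 → G.V} : (∀ k, X k ∈ L ∧ X k ∈ G.plane k) →
      (∀ k l, k ≠ l → ¬ r (X k) (X l)) → (∀ k i, r (X k) (G.S i) → i = k) → Decodes G r L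

lemma IsPlaneCongruence.source_injective (hr : G.IsPlaneCongruence r) :
    Function.Injective fun i ↦ (⟦G.S i⟧ : Quotient r) :=
  fun i j h ↦ hr.source i j (Quotient.exact h)

section Code

variable {F : Type*} [Field F] {w : Quotient r → Fin 3 → F}

open Classical in
/-- The code on `Π` attached to vectors `w` of the classes of `r`: the vector of the class,
projected to the coordinate plane of the vertex. -/
noncomputable def planeCode (G : RegionGraph n) {r : Setoid G.V} (w : Quotient r → Fin 3 → F)
    (v : G.V) : Fin 3 → F :=
  if h : ∃ k, v ∈ G.plane k then planeProj F h.choose (w ⟦v⟧) else 0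

lemma planeCode_of_mem_plane (hw : IsGeneric (fun i ↦ ⟦G.S i⟧) w) {v : G.V}
    (hv : v ∈ G.plane k) : G.planeCode w v = planeProj F k (w ⟦v⟧) := by
  have hex : ∃ k, v ∈ G.plane k := ⟨k, hv⟩
  have hchoose : v ∈ G.plane hex.choose := hex.choose_spec
  rw [planeCode, dif_pos hex]
  generalize hex.choose = l at hchoose
  by_cases hlk : l = k
  · rw [hlk]
  · obtain ⟨i, rfl⟩ := exists_source_of_mem_plane_inter hchoose hv hlk
    rw [hw.source, planeProj_single (source_mem_plane_iff.1 hchoose),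
      planeProj_single (source_mem_plane_iff.1 hv)]

lemma planeCode_source (hw : IsGeneric (fun i ↦ ⟦G.S i⟧) w) (i : Fin 3) :
    G.planeCode w (G.S i) = Pi.single i 1 := by
  obtain ⟨k, hk⟩ := exists_ne i
  rw [planeCode_of_mem_plane hw (source_mem_plane_iff.2 hk.symm), hw.source,
    planeProj_single hk.symm]

lemma planeCode_mem_span_parents (hr : G.IsPlaneCongruence r)
    (hw : IsGeneric (fun i ↦ ⟦G.S i⟧) w) {R : G.V} (hR : R ∈ G.plane k)
    (hRs : ∀ i, R ≠ G.S i) :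
    G.planeCode w R ∈ Submodule.span F (G.planeCode w '' {p | G.Adj p R}) := by
  by_cases hall : ∀ P Q, G.Adj P R → G.Adj Q R → r P Q
  · obtain ⟨P, hP, hPR⟩ := hr.parents k R hR hRs hall
    refine Submodule.subset_span ⟨P, hP, ?_⟩
    rw [planeCode_of_mem_plane hw hR, planeCode_of_mem_plane hw (parent_mem_plane hR hP),
      Quotient.sound hPR]
  · push Not at hall
    obtain ⟨P, Q, hP, hQ, hPQ⟩ := hall
    have hmem : planeProj F k (w ⟦R⟧) ∈
        Submodule.span F {planeProj F k (w ⟦P⟧), planeProj F k (w ⟦Q⟧)} :=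
      mem_span_planeProj_pair (hw.span_pair fun h ↦ hPQ (Quotient.exact h)) (by simp)
    rw [planeCode_of_mem_plane hw hR]
    refine Submodule.span_mono ?_ hmem
    rw [Set.insert_subset_iff, Set.singleton_subset_iff]
    exact ⟨⟨P, hP, planeCode_of_mem_plane hw (parent_mem_plane hR hP)⟩,
      ⟨Q, hQ, planeCode_of_mem_plane hw (parent_mem_plane hR hQ)⟩⟩

lemma planeCode_apply_ne_zero (hr : G.IsPlaneCongruence r)
    (hw : IsGeneric (fun i ↦ ⟦G.S i⟧) w) {Z : G.V} (hZPi : Z ∈ G.bigPi)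
    (hZ : G.IsTransversal r k Z) : G.planeCode w Z k ≠ 0 := by
  obtain ⟨l, hl⟩ := mem_bigPi_iff.1 hZPi
  have hkl : k ≠ l := fun h ↦ hZ.1 (h ▸ hl)
  rw [planeCode_of_mem_plane hw hl, planeProj_apply]
  refine hw.apart _ k l hkl fun i hi ↦ (hZ.2 i (Quotient.exact hi)).imp_right fun hZi ↦ ?_
  by_contra hil
  obtain ⟨j, rfl⟩ := exists_source_of_mem_plane_inter hZi hl hil
  exact source_mem_plane_iff.1 hZi (hr.source j i (Quotient.exact hi))

lemma Decodes.one_mem_span (hr : G.IsPlaneCongruence r) (hw : IsGeneric (fun i ↦ ⟦G.S i⟧) w)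
    (hL : L ⊆ G.bigPi) (h : G.Decodes r L) : 1 ∈ Submodule.span F (G.planeCode w '' L) := by
  have hmem : ∀ {X}, X ∈ L → G.planeCode w X ∈ Submodule.span F (G.planeCode w '' L) :=
    fun hX ↦ Submodule.subset_span ⟨_, hX, rfl⟩
  cases h with
  | related hXL hX hZL hZ hXZ =>
    refine one_mem_of_planeProj_mem (hmem hZL) (planeCode_apply_ne_zero hr hw (hL hZL) hZ) ?_
    obtain ⟨l, hl⟩ := mem_bigPi_iff.1 (hL hZL)
    rw [planeCode_of_mem_plane hw hl, planeProj_planeProj, ← Quotient.sound hXZ,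
      ← planeCode_of_mem_plane hw hX]
    exact hmem hXL
  | @coplanar k X Y Z hXL hX hYL hY hXY hZL hZ =>
    refine one_mem_of_planeProj_mem (hmem hZL) (planeCode_apply_ne_zero hr hw (hL hZL) hZ) ?_
    have hspan : planeProj F k (G.planeCode w Z) ∈
        Submodule.span F {planeProj F k (w ⟦X⟧), planeProj F k (w ⟦Y⟧)} :=
      mem_span_planeProj_pair (hw.span_pair fun h ↦ hXY (Quotient.exact h)) (by simp)
    rw [← planeCode_of_mem_plane hw hX, ← planeCode_of_mem_plane hw hY] at hspan
    refine Submodule.span_le.2 ?_ hspan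
    rw [Set.insert_subset_iff, Set.singleton_subset_iff]
    exact ⟨hmem hXL, hmem hYL⟩
  | @rainbow X hX hXX hXS =>
    have htop := span_range_eq_top_of_det_ne_zero (hw.triple (fun k ↦ ⟦X k⟧)
      (fun k l h ↦ by_contra fun hkl ↦ hXX k l hkl (Quotient.exact h))
      fun k i h ↦ hXS k i (Quotient.exact h))
    refine Submodule.span_mono ?_ (htop ▸ Submodule.mem_top : (1 : Fin 3 → F) ∈ _)
    rintro _ ⟨k, rfl⟩
    exact ⟨X k, (hX k).1, planeCode_of_mem_plane hw (hX k).2⟩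

end Code

theorem feasible_of_decodes (hA : G.Assumption1) (hTS : G.TerminalSeparable)
    (hr : G.IsPlaneCongruence r) (h : ∀ j, G.Decodes r (G.Lambda {j})) : G.Feasible := by
  have := G.fintypeV
  obtain ⟨F, _, _, w, hw⟩ := exists_isGeneric_field hr.source_injective
  refine feasible_of_conds123 hA hTS (d := G.planeCode w) ⟨planeCode_source hw, fun R hR hRs ↦ ?_,
    fun j ↦ (h j).one_mem_span hr hw (Lambda_subset_bigPi j)⟩
  obtain ⟨k, hk⟩ := mem_bigPi_iff.1 hR
  exact planeCode_mem_span_parents hr hw hk hRs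

end Decoding

/-- A set of vertices that may be identified without forcing any other identification. -/
structure IsMergeable (G : RegionGraph n) (C : Set G.V) : Prop where
  reg_subset : ∀ k, G.reg (C ∩ G.plane k) ⊆ C
  source : ∀ i j, G.S i ∈ C → G.S j ∈ C → i = j

/-- The vertices that are forced to be identified with `D`, plane by plane, once the vertices of
`D` are identified with each other. -/
def planeClosure (G : RegionGraph n) (D : Set G.V) : Set G.V := ⋃ k, G.reg (D ∩ G.plane k)

section PlaneClosure

variable {k : Fin 3} {C D : Set G.V} {R : G.V}

lemma isMergeable_of_subsingleton (h : ∀ k, (C ∩ G.plane k).Subsingleton) : G.IsMergeable C where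
  reg_subset k := by
    rw [reg_eq_of_subsingleton (h k)]
    exact Set.inter_subset_left
  source i j hi hj := by
    obtain ⟨k, hki, hkj⟩ := Fin.exists_ne_and_ne_of_two_lt i j (by norm_num)
    exact G.S_inj (h k ⟨hi, source_mem_plane_iff.2 hki.symm⟩ ⟨hj, source_mem_plane_iff.2 hkj.symm⟩)

lemma subset_planeClosure (hD : D ⊆ G.bigPi) : D ⊆ G.planeClosure D := fun _ h ↦
  let ⟨k, hk⟩ := mem_bigPi_iff.1 (hD h)
  Set.mem_iUnion.2 ⟨k, subset_reg _ ⟨h, hk⟩⟩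

lemma source_mem_of_mem_planeClosure {i : Fin 3} (h : G.S i ∈ G.planeClosure D) : G.S i ∈ D :=
  let ⟨_, hk⟩ := Set.mem_iUnion.1 h
  (source_mem_reg_iff.1 hk).1

lemma mem_reg_of_mem_planeClosure (hR : R ∈ G.planeClosure D) (hk : R ∈ G.plane k) :
    R ∈ G.reg (D ∩ G.plane k) := by
  obtain ⟨l, hl⟩ := Set.mem_iUnion.1 hR
  by_cases hkl : k = l
  · exact hkl ▸ hl
  · obtain ⟨i, rfl⟩ := exists_source_of_mem_plane_inter hk
      (reg_subset_plane Set.inter_subset_right hl) hkl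
    exact subset_reg _ ⟨source_mem_of_mem_planeClosure hR, hk⟩

lemma exists_mem_plane_of_mem_planeClosure (hR : R ∈ G.planeClosure D) (hk : R ∈ G.plane k) :
    ∃ Y ∈ D, Y ∈ G.plane k := by
  by_contra! hD
  have hempty : D ∩ G.plane k = ∅ := Set.eq_empty_of_forall_notMem fun Y hY ↦ hD Y hY.1 hY.2
  have hRreg := mem_reg_of_mem_planeClosure hR hk
  rwa [hempty, reg_eq_of_subsingleton Set.subsingleton_empty] at hRreg

lemma IsMergeable.planeClosure_eq (hD : G.IsMergeable D) (hPi : D ⊆ G.bigPi) :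
    G.planeClosure D = D :=
  (Set.iUnion_subset hD.reg_subset).antisymm (subset_planeClosure hPi)

lemma isMergeable_planeClosure (hD : ∀ i j, G.S i ∈ D → G.S j ∈ D → i = j) :
    G.IsMergeable (G.planeClosure D) where
  reg_subset k := (reg_subset_reg fun _ h ↦ mem_reg_of_mem_planeClosure h.1 h.2).trans
    (Set.subset_iUnion (fun k ↦ G.reg (D ∩ G.plane k)) k)
  source i j hi hj := hD i j (source_mem_of_mem_planeClosure hi) (source_mem_of_mem_planeClosure hj)

end PlaneClosure

/-- The equivalence relation whose only nontrivial classes are the members of `𝒞`. -/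
def mergeSetoid {V : Type*} {𝒞 : Set (Set V)} (h𝒞 : 𝒞.PairwiseDisjoint id) : Setoid V where
  r X Y := X = Y ∨ ∃ C ∈ 𝒞, X ∈ C ∧ Y ∈ C
  iseqv :=
    { refl := fun _ ↦ .inl rfl
      symm := by
        rintro X Y (rfl | ⟨C, hC, hX, hY⟩)
        exacts [.inl rfl, .inr ⟨C, hC, hY, hX⟩]
      trans := by
        rintro X Y Z (rfl | ⟨C, hC, hX, hY⟩) (rfl | ⟨C', hC', hY', hZ⟩)
        · exact .inl rfl
        · exact .inr ⟨C', hC', hY', hZ⟩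
        · exact .inr ⟨C, hC, hX, hY⟩
        · obtain rfl := h𝒞.elim_set hC hC' Y hY hY'
          exact .inr ⟨C, hC, hX, hZ⟩ }

section Merge

variable {𝒞 : Set (Set G.V)} {h𝒞 : 𝒞.PairwiseDisjoint id} {C L : Set G.V} {k : Fin 3} {X Y : G.V}

lemma mergeSetoid_iff_of_mem (hC : C ∈ 𝒞) (hX : X ∈ C) : mergeSetoid h𝒞 X Y ↔ Y ∈ C := by
  constructor
  · rintro (rfl | ⟨C', hC', hX', hY⟩)
    · exact hX
    · exact h𝒞.elim_set hC hC' X hX hX' ▸ hY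
  · exact fun hY ↦ .inr ⟨C, hC, hX, hY⟩

lemma isPlaneCongruence_mergeSetoid (hM : ∀ C ∈ 𝒞, G.IsMergeable C) :
    G.IsPlaneCongruence (mergeSetoid h𝒞) where
  source := by
    rintro i j (h | ⟨C, hC, hi, hj⟩)
    exacts [G.S_inj h, (hM C hC).source i j hi hj]
  parents k R hR hRs hall := by
    obtain ⟨P, Q, hne, hP, hQ⟩ := G.two_parents R hRs
    obtain h | ⟨C, hC, hPC, -⟩ := hall P Q hP hQ
    · exact absurd h hne
    refine ⟨P, hP, (mergeSetoid_iff_of_mem hC hPC).2 ((hM C hC).reg_subset k ?_)⟩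
    exact mem_reg_of_parents ⟨P, hP⟩ fun P' hP' ↦ subset_reg _
      ⟨(mergeSetoid_iff_of_mem hC hPC).1 (hall P P' hP hP'), parent_mem_plane hR hP'⟩

/-- Identifying the vertices of `C` makes `ᾱ` a combination of the vectors at two members of
`L`. -/
def Links (G : RegionGraph n) (C L : Set G.V) : Prop :=
  ∃ k X Y, X ∈ L ∧ X ∈ C ∧ X ∈ G.plane k ∧ Y ∈ L ∧ Y ∈ C ∧ Y ∉ G.plane k ∧
    ∀ i, G.S i ∈ C → i = k ∨ Y ∈ G.plane i

lemma Links.decodes (h : G.Links C L) (hC : C ∈ 𝒞) : G.Decodes (mergeSetoid h𝒞) L := by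
  obtain ⟨k, X, Y, hXL, hXC, hX, hYL, hYC, hY, hsource⟩ := h
  exact .related hXL hX hYL ⟨hY, fun i hi ↦ hsource i ((mergeSetoid_iff_of_mem hC hYC).1 hi)⟩
    ((mergeSetoid_iff_of_mem hC hXC).2 hYC)

/-- No plane contains both `X` and `Y`. -/
def Skew (G : RegionGraph n) (X Y : G.V) : Prop := ∀ k, X ∈ G.plane k → Y ∉ G.plane k

lemma Skew.symm (h : G.Skew X Y) : G.Skew Y X := fun k hY hX ↦ h k hX hY

lemma Skew.eq_of_source_left {i : Fin 3} (h : G.Skew (G.S i) Y) (hY : Y ∈ G.plane k) : k = i := by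
  by_contra hki
  exact h k (source_mem_plane_iff.2 (Ne.symm hki)) hY

lemma Skew.mem_plane_of_source_left {i : Fin 3} (h : G.Skew (G.S i) Y) (hY : Y ∈ G.bigPi) :
    Y ∈ G.plane i := by
  obtain ⟨k, hk⟩ := mem_bigPi_iff.1 hY
  rwa [← h.eq_of_source_left hk]

lemma skew_of_not_source (hXs : ∀ i, X ≠ G.S i) (hX : X ∈ G.plane k) (hY : Y ∉ G.plane k) :
    G.Skew X Y := by
  intro l hl
  rwa [plane_unique hXs hl hX]

lemma Skew.pair_inter_plane_subsingleton (h : G.Skew X Y) (k : Fin 3) :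
    ({X, Y} ∩ G.plane k).Subsingleton := by
  rintro A ⟨rfl | rfl, hA⟩ B ⟨rfl | rfl, hB⟩
  exacts [rfl, absurd hB (h k hA), absurd hA (h k hB), rfl]

lemma Skew.isMergeable_pair (h : G.Skew X Y) : G.IsMergeable {X, Y} :=
  isMergeable_of_subsingleton h.pair_inter_plane_subsingleton

lemma Skew.ne_source_right {i : Fin 3} (h : G.Skew (G.S i) Y) (l : Fin 3) : Y ≠ G.S l := by
  rintro rfl
  obtain ⟨m, hmi, hml⟩ := Fin.exists_ne_and_ne_of_two_lt i l (by norm_num)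
  exact h m (source_mem_plane_iff.2 hmi.symm) (source_mem_plane_iff.2 hml.symm)

lemma Skew.links (h : G.Skew X Y) (hC : ∀ i j, G.S i ∈ C → G.S j ∈ C → i = j)
    (hX : X ∈ G.bigPi) (hXL : X ∈ L) (hXC : X ∈ C) (hYL : Y ∈ L) (hYC : Y ∈ C)
    (hs : ∀ i, G.S i ∈ C → X ∈ G.plane i ∨ Y ∈ G.plane i) : G.Links C L := by
  by_cases hk : ∃ k, G.S k ∈ C ∧ X ∈ G.plane k
  · obtain ⟨k, hkC, hk⟩ := hk
    exact ⟨k, X, Y, hXL, hXC, hk, hYL, hYC, h k hk, fun i hi ↦ .inl (hC i k hi hkC)⟩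
  · obtain ⟨k, hkX⟩ := mem_bigPi_iff.1 hX
    exact ⟨k, X, Y, hXL, hXC, hkX, hYL, hYC, h k hkX,
      fun i hi ↦ .inr ((hs i hi).resolve_left fun hiX ↦ hk ⟨i, hi, hiX⟩)⟩

lemma Skew.links_pair (h : G.Skew X Y) (hX : X ∈ G.bigPi) (hY : Y ∈ G.bigPi) :
    G.Links {X, Y} {X, Y} := by
  refine h.links h.isMergeable_pair.source hX (.inl rfl) (.inl rfl) (.inr rfl) (.inr rfl) ?_
  rintro i (rfl | rfl)
  · exact .inr (h.mem_plane_of_source_left hY)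
  · exact .inl (h.symm.mem_plane_of_source_left hX)

lemma skew_of_Lambda_eq_pair (hA : G.Assumption1) (hTS : G.TerminalSeparable) {j : Fin n}
    (hj : G.Lambda {j} = {X, Y}) : G.Skew X Y := by
  intro k hX hY
  refine not_Lambda_subset_plane hA hTS j k ?_
  rw [hj]
  rintro _ (rfl | rfl)
  exacts [hX, hY]

end Merge

section NotPair

variable {r : Setoid G.V} {L : Set G.V}

lemma exists_injective_mem_plane (hPi : L ⊆ G.bigPi) (hL : ∀ k, ¬ L ⊆ G.plane k)
    (hpair : ∀ X Y, L ≠ {X, Y}) (hsub : ∀ k, (L ∩ G.plane k).Subsingleton) :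
    ∃ X : Fin 3 → G.V, Function.Injective X ∧ ∀ k, X k ∈ L ∩ G.plane k := by
  have hex : ∀ k, ∃ X, X ∈ L ∩ G.plane k := by
    intro k
    by_contra! hk
    obtain ⟨X, hX, hXk⟩ := Set.not_subset.1 (hL (k + 1))
    obtain ⟨Y, hY, hYk⟩ := Set.not_subset.1 (hL (k + 2))
    refine hpair X Y (Set.Subset.antisymm (fun Z hZ ↦ ?_) (Set.pair_subset hX hY))
    obtain ⟨a, ha⟩ := mem_bigPi_iff.1 (hPi hX)
    obtain ⟨b, hb⟩ := mem_bigPi_iff.1 (hPi hY)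
    obtain ⟨c, hc⟩ := mem_bigPi_iff.1 (hPi hZ)
    have hca : c = a ∨ c = b := by
      have hak : a ≠ k := fun h ↦ hk X ⟨hX, h ▸ ha⟩
      have hbk : b ≠ k := fun h ↦ hk Y ⟨hY, h ▸ hb⟩
      have hck : c ≠ k := fun h ↦ hk Z ⟨hZ, h ▸ hc⟩
      have hak' : a ≠ k + 1 := fun h ↦ hXk (h ▸ ha)
      have hbk' : b ≠ k + 2 := fun h ↦ hYk (h ▸ hb)
      omega
    rcases hca with rfl | rfl
    · exact .inl (hsub _ ⟨hZ, hc⟩ ⟨hX, ha⟩)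
    · exact .inr (hsub _ ⟨hZ, hc⟩ ⟨hY, hb⟩)
  choose X hX using hex
  refine ⟨X, fun k l hkl ↦ ?_, hX⟩
  by_contra
  obtain ⟨m, hmk, hml⟩ := Fin.exists_ne_and_ne_of_two_lt k l (by norm_num)
  refine hpair (X k) (X m) (Set.Subset.antisymm (fun Z hZ ↦ ?_)
    (Set.pair_subset (hX k).1 (hX m).1))
  obtain ⟨c, hc⟩ := mem_bigPi_iff.1 (hPi hZ)
  have hZc : Z = X c := hsub c ⟨hZ, hc⟩ (hX c)
  obtain rfl | rfl | rfl : c = k ∨ c = l ∨ c = m := by omega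
  exacts [.inl hZc, .inl (hZc.trans hkl.symm), .inr hZc]

lemma decodes_of_ne_pair (hPi : L ⊆ G.bigPi) (hL : ∀ k, ¬ L ⊆ G.plane k)
    (hpair : ∀ X Y, L ≠ {X, Y})
    (hinj : ∀ k, ∀ X ∈ L ∩ G.plane k, ∀ Y ∈ L ∩ G.plane k, r X Y → X = Y)
    (hsource : ∀ k, ∀ Z ∈ L ∩ G.plane k, ∀ i, r Z (G.S i) → i = k ∨ Z = G.S i) :
    G.Decodes r L := by
  by_cases hsub : ∀ k, (L ∩ G.plane k).Subsingleton
  · obtain ⟨X, hX, hXL⟩ := exists_injective_mem_plane hPi hL hpair hsub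
    have huniq : ∀ k l, X k ∈ G.plane l → k = l := fun k l hk ↦
      hX (hsub l ⟨(hXL k).1, hk⟩ (hXL l))
    have hXs : ∀ k i, r (X k) (G.S i) → i = k := by
      intro k i hi
      refine (hsource k _ (hXL k) i hi).elim id fun hki ↦ ?_
      obtain ⟨m, hmi, hmk⟩ := Fin.exists_ne_and_ne_of_two_lt i k (by norm_num)
      exact absurd (huniq k m (hki ▸ source_mem_plane_iff.2 hmi.symm)) hmk.symm
    by_cases hrel : ∃ k l, k ≠ l ∧ r (X k) (X l)
    · obtain ⟨k, l, hkl, hr⟩ := hrel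
      exact .related (hXL k).1 (hXL k).2 (hXL l).1
        ⟨fun h ↦ hkl (huniq l k h).symm, fun i hi ↦ .inr (hXs l i hi ▸ (hXL l).2)⟩ hr
    · push Not at hrel
      exact .rainbow hXL hrel hXs
  · simp only [Set.Subsingleton, not_forall] at hsub
    obtain ⟨k, X, hX, Y, hY, hne⟩ := hsub
    obtain ⟨Z, hZL, hZ⟩ := Set.not_subset.1 (hL k)
    obtain ⟨l, hl⟩ := mem_bigPi_iff.1 (hPi hZL)
    refine .coplanar hX.1 hX.2 hY.1 hY.2 (fun h ↦ hne (hinj k X hX Y hY h)) hZL ⟨hZ, fun i hi ↦ ?_⟩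
    rcases hsource l Z ⟨hZL, hl⟩ i hi with rfl | rfl
    · exact .inr hl
    · exact .inl (by simpa using hZ)

end NotPair

section Feasible

variable {C : Set G.V} {c : Fin n} {X Y : G.V}

theorem feasible_of_links (hA : G.Assumption1) (hTS : G.TerminalSeparable) (hC : G.IsMergeable C)
    (hlinks : ∀ j, G.Links C (G.Lambda {j})) : G.Feasible :=
  feasible_of_decodes hA hTS (r := mergeSetoid (Set.pairwiseDisjoint_singleton C id))
    (isPlaneCongruence_mergeSetoid (by rintro _ rfl; exact hC)) fun j ↦ (hlinks j).decodes rfl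

theorem feasible_of_links_of_pair (hA : G.Assumption1) (hTS : G.TerminalSeparable)
    (hC : G.IsMergeable C) (hlinks : ∀ j ≠ c, G.Links C (G.Lambda {j}))
    (hc : G.Lambda {c} = {X, Y}) (hX : X ∉ C) (hY : Y ∉ C) : G.Feasible := by
  have hskew := skew_of_Lambda_eq_pair hA hTS hc
  have hsub := hc ▸ Lambda_subset_bigPi c
  have hdisj : ({C, {X, Y}} : Set (Set G.V)).PairwiseDisjoint id :=
    Set.pairwise_pair_of_symm.2 fun _ ↦ by simp [Function.onFun, hX, hY]
  refine feasible_of_decodes hA hTS (r := mergeSetoid hdisj) (isPlaneCongruence_mergeSetoid ?_)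
    fun j ↦ ?_
  · rintro _ (rfl | rfl)
    exacts [hC, hskew.isMergeable_pair]
  · by_cases hj : j = c
    · rw [hj, hc]
      exact (hskew.links_pair (hsub (.inl rfl)) (hsub (.inr rfl))).decodes (.inr rfl)
    · exact (hlinks j hj).decodes (.inl rfl)

theorem feasible_of_links_of_ne_pair (hA : G.Assumption1) (hTS : G.TerminalSeparable)
    (hC : G.IsMergeable C) (hlinks : ∀ j ≠ c, G.Links C (G.Lambda {j}))
    (hc : ∀ X Y, G.Lambda {c} ≠ {X, Y}) (hinj : ∀ k, (G.Lambda {c} ∩ C ∩ G.plane k).Subsingleton)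
    (hsource : ∀ k, ∀ Z ∈ G.Lambda {c} ∩ C ∩ G.plane k, ∀ i, G.S i ∈ C → i = k ∨ Z = G.S i) :
    G.Feasible := by
  refine feasible_of_decodes hA hTS (r := mergeSetoid (Set.pairwiseDisjoint_singleton C id))
    (isPlaneCongruence_mergeSetoid (by rintro _ rfl; exact hC)) fun j ↦ ?_
  by_cases hj : j = c
  · subst hj
    refine decodes_of_ne_pair (Lambda_subset_bigPi j) (not_Lambda_subset_plane hA hTS j) hc ?_ ?_
    · rintro k X hX Y hY (rfl | ⟨_, rfl, hXC, hYC⟩)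
      exacts [rfl, hinj k ⟨⟨hX.1, hXC⟩, hX.2⟩ ⟨⟨hY.1, hYC⟩, hY.2⟩]
    · rintro k Z hZ i (rfl | ⟨_, rfl, hZC, hiC⟩)
      exacts [.inr rfl, hsource k Z ⟨⟨hZ.1, hZC⟩, hZ.2⟩ i hiC]
  · exact (hlinks j hj).decodes rfl

theorem feasible_of_links_of_subset_source (hA : G.Assumption1) (hTS : G.TerminalSeparable)
    (hC : G.IsMergeable C) (hlinks : ∀ j ≠ c, G.Links C (G.Lambda {j}))
    (hc : ∀ X Y, G.Lambda {c} ≠ {X, Y}) (hs : ∀ X ∈ G.Lambda {c} ∩ C, ∃ i, X = G.S i) :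
    G.Feasible := by
  refine feasible_of_links_of_ne_pair hA hTS hC hlinks hc (fun k X hX Y hY ↦ ?_)
    fun k Z hZ i hi ↦ ?_
  · obtain ⟨i, rfl⟩ := hs X hX.1
    obtain ⟨j, rfl⟩ := hs Y hY.1
    rw [hC.source i j hX.1.2 hY.1.2]
  · obtain ⟨j, rfl⟩ := hs Z hZ.1
    exact .inr (congrArg G.S (hC.source j i hZ.1.2 hi))

theorem feasible_of_links_of_not_skew (hA : G.Assumption1) (hTS : G.TerminalSeparable)
    (hC : G.IsMergeable C) (hlinks : ∀ j ≠ c, G.Links C (G.Lambda {j}))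
    (hskew : ∀ X ∈ G.Lambda {c} ∩ C, ∀ Y ∈ G.Lambda {c}, ¬ G.Skew X Y) : G.Feasible := by
  by_cases hpair : ∃ X Y, G.Lambda {c} = {X, Y}
  · obtain ⟨X, Y, hc⟩ := hpair
    have hXY := skew_of_Lambda_eq_pair hA hTS hc
    have hX : X ∈ G.Lambda {c} := hc ▸ .inl rfl
    have hY : Y ∈ G.Lambda {c} := hc ▸ .inr rfl
    exact feasible_of_links_of_pair hA hTS hC hlinks hc (fun h ↦ hskew X ⟨hX, h⟩ Y hY hXY)
      fun h ↦ hskew Y ⟨hY, h⟩ X hX hXY.symm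
  · refine feasible_of_links_of_subset_source hA hTS hC hlinks
      (fun X Y h ↦ hpair ⟨X, Y, h⟩) fun X hX ↦ ?_
    by_contra! hXs
    obtain ⟨k, hk⟩ := mem_bigPi_iff.1 (Lambda_subset_bigPi c hX.1)
    obtain ⟨Y, hY, hYk⟩ := Set.not_subset.1 (not_Lambda_subset_plane hA hTS c k)
    exact hskew X hX Y hY (skew_of_not_source hXs hk hYk)

theorem feasible_of_links_of_coplanar (hA : G.Assumption1) (hTS : G.TerminalSeparable)
    (hC : G.IsMergeable C) (hlinks : ∀ j ≠ c, G.Links C (G.Lambda {j})) {k : Fin 3} {Z : G.V}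
    (hX : X ∈ G.Lambda {c} ∩ C) (hY : Y ∈ G.Lambda {c} \ C) (hZ : Z ∈ G.Lambda {c} \ C)
    (hXk : X ∈ G.plane k) (hYk : Y ∈ G.plane k) (hZk : Z ∉ G.plane k) : G.Feasible := by
  refine feasible_of_decodes hA hTS (r := mergeSetoid (Set.pairwiseDisjoint_singleton C id))
    (isPlaneCongruence_mergeSetoid (by rintro _ rfl; exact hC)) fun j ↦ ?_
  by_cases hj : j = c
  · subst hj
    refine .coplanar hX.1 hXk hY.1 hYk
      (fun h ↦ hY.2 ((mergeSetoid_iff_of_mem (Set.mem_singleton C) hX.2).1 h)) hZ.1 ⟨hZk, ?_⟩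
    rintro i (rfl | ⟨_, rfl, hZC, -⟩)
    · exact .inl (by simpa using hZk)
    · exact absurd hZC hZ.2
  · exact (hlinks j hj).decodes rfl

theorem feasible_of_pairs_disjoint (hA : G.Assumption1) (hTS : G.TerminalSeparable)
    (h : {C | (∃ X Y, C = {X, Y}) ∧ ∃ j, G.Lambda {j} = C}.PairwiseDisjoint id) :
    G.Feasible := by
  have hskew : ∀ {j X Y}, G.Lambda {j} = {X, Y} → G.Skew X Y := skew_of_Lambda_eq_pair hA hTS
  refine feasible_of_decodes hA hTS (r := mergeSetoid h) (isPlaneCongruence_mergeSetoid ?_)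
    fun j ↦ ?_
  · rintro _ ⟨⟨X, Y, rfl⟩, j, hj⟩
    exact (hskew hj).isMergeable_pair
  by_cases hpair : ∃ X Y, G.Lambda {j} = {X, Y}
  · obtain ⟨X, Y, hj⟩ := hpair
    have hsub := hj ▸ Lambda_subset_bigPi j
    rw [hj]
    exact ((hskew hj).links_pair (hsub (.inl rfl)) (hsub (.inr rfl))).decodes
      ⟨⟨X, Y, rfl⟩, j, hj⟩
  push Not at hpair
  refine decodes_of_ne_pair (Lambda_subset_bigPi j) (not_Lambda_subset_plane hA hTS j) hpair ?_ ?_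
  · rintro k X hX Y hY (rfl | ⟨_, ⟨⟨A, B, rfl⟩, i, hi⟩, hXC, hYC⟩)
    exacts [rfl, (hskew hi).pair_inter_plane_subsingleton k ⟨hXC, hX.2⟩ ⟨hYC, hY.2⟩]
  · rintro k Z hZ i (rfl | ⟨_, ⟨⟨A, B, rfl⟩, l, hl⟩, hZC, hiC⟩)
    · exact .inr rfl
    · by_cases hik : i = k
      · exact .inl hik
      · exact .inr ((hskew hl).pair_inter_plane_subsingleton k ⟨hZC, hZ.2⟩
          ⟨hiC, source_mem_plane_iff.2 hik⟩)

end Feasible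

section SkewPair

variable {C D D' L : Set G.V} {c j : Fin n} {X Y : G.V}

lemma planeClosure_mono (h : D ⊆ D') : G.planeClosure D ⊆ G.planeClosure D' :=
  Set.iUnion_mono fun _ ↦ reg_mono (Set.inter_subset_inter_left _ h)

/-- `L` has two skew members in `D` through which every mergeable set that contains `D`, and no
source outside `D`, links `L`. -/
def HasSkewPair (G : RegionGraph n) (D L : Set G.V) : Prop :=
  ∃ X ∈ L ∩ D, ∃ Y ∈ L ∩ D, G.Skew X Y ∧ ∀ i, G.S i ∈ D → X ∈ G.plane i ∨ Y ∈ G.plane i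

lemma HasSkewPair.mono (h : G.HasSkewPair D L) (hsub : D ⊆ D')
    (hs : ∀ i, G.S i ∈ D' → G.S i ∈ D) : G.HasSkewPair D' L :=
  let ⟨X, hX, Y, hY, hXY, hi⟩ := h
  ⟨X, ⟨hX.1, hsub hX.2⟩, Y, ⟨hY.1, hsub hY.2⟩, hXY, fun i h ↦ hi i (hs i h)⟩

lemma HasSkewPair.links (h : G.HasSkewPair D L) (hD : D ⊆ G.bigPi)
    (hs : ∀ i j, G.S i ∈ D → G.S j ∈ D → i = j) : G.Links (G.planeClosure D) L :=
  let ⟨_, hX, _, hY, hXY, hi⟩ := h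
  hXY.links (isMergeable_planeClosure hs).source (hD hX.2) hX.1 (subset_planeClosure hD hX.2)
    hY.1 (subset_planeClosure hD hY.2) fun i h ↦ hi i (source_mem_of_mem_planeClosure h)

lemma hasSkewPair_of_Lambda_eq_pair (hA : G.Assumption1) (hTS : G.TerminalSeparable)
    (hj : G.Lambda {j} = {X, Y}) (hX : X ∈ D) (hY : Y ∈ D)
    (hs : ∀ i, G.S i ∈ D → X ∈ G.plane i ∨ Y ∈ G.plane i) : G.HasSkewPair D (G.Lambda {j}) :=
  ⟨X, ⟨hj ▸ .inl rfl, hX⟩, Y, ⟨hj ▸ .inr rfl, hY⟩, skew_of_Lambda_eq_pair hA hTS hj, hs⟩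

theorem feasible_of_skew (hA : G.Assumption1) (hTS : G.TerminalSeparable) (hD : D ⊆ G.bigPi)
    (hs : ∀ i j, G.S i ∈ D → G.S j ∈ D → i = j)
    (hpair : ∀ j ≠ c, G.HasSkewPair D (G.Lambda {j}))
    (hX : X ∈ G.Lambda {c} ∩ G.planeClosure D) (hY : Y ∈ G.Lambda {c}) (hXY : G.Skew X Y)
    (hYs : ∀ i, Y = G.S i → G.S i ∈ D)
    (hXYs : ∀ i, G.S i ∈ D → X ∈ G.plane i ∨ Y ∈ G.plane i) : G.Feasible := by
  have hD' : insert X (insert Y D) ⊆ G.bigPi :=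
    Set.insert_subset hX.1.1 (Set.insert_subset hY.1 hD)
  have hsource : ∀ i, G.S i ∈ insert X (insert Y D) → G.S i ∈ D := by
    rintro i (rfl | rfl | hi)
    exacts [source_mem_of_mem_planeClosure hX.2, hYs i rfl, hi]
  have hs' : ∀ i j, G.S i ∈ insert X (insert Y D) → G.S j ∈ insert X (insert Y D) → i = j :=
    fun i j hi hj ↦ hs i j (hsource i hi) (hsource j hj)
  refine feasible_of_links hA hTS (isMergeable_planeClosure hs') fun j ↦
    HasSkewPair.links ?_ hD' hs'
  by_cases hj : j = c
  · rw [hj]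
    exact ⟨X, ⟨hX.1, .inl rfl⟩, Y, ⟨hY, .inr (.inl rfl)⟩, hXY, fun i hi ↦ hXYs i (hsource i hi)⟩
  · exact (hpair j hj).mono (fun Z hZ ↦ .inr (.inr hZ)) hsource

theorem feasible_of_hasSkewPair (hA : G.Assumption1) (hTS : G.TerminalSeparable)
    (hD : D ⊆ G.bigPi) (hs : ∀ i j, G.S i ∈ D → G.S j ∈ D → i = j)
    (hpair : ∀ j ≠ c, G.HasSkewPair D (G.Lambda {j}))
    (hc : ∀ X ∈ G.Lambda {c} ∩ G.planeClosure D, ∀ Y ∈ G.Lambda {c}, G.Skew X Y →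
      (∀ i, Y = G.S i → G.S i ∈ D) ∧ ∀ i, G.S i ∈ D → X ∈ G.plane i ∨ Y ∈ G.plane i) :
    G.Feasible := by
  by_cases hskew : ∀ X ∈ G.Lambda {c} ∩ G.planeClosure D, ∀ Y ∈ G.Lambda {c}, ¬ G.Skew X Y
  · exact feasible_of_links_of_not_skew hA hTS (isMergeable_planeClosure hs)
      (fun j hj ↦ (hpair j hj).links hD hs) hskew
  · push Not at hskew
    obtain ⟨X, hX, Y, hY, hXY⟩ := hskew
    have hXYs := hc X hX Y hY hXY
    exact feasible_of_skew hA hTS hD hs hpair hX hY hXY hXYs.1 hXYs.2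

end SkewPair

lemma reg_source_pair_subset_plane {i k : Fin 3} {P : G.V} (hk : k ≠ i) (hP : P ∈ G.plane k) :
    G.reg {G.S i, P} ⊆ G.plane k :=
  reg_subset_plane (Set.pair_subset (source_mem_plane_iff.2 hk.symm) hP)

/-- The configuration of (C-IR) at the terminals `a` and `b`, up to the position of `P₁` and
`P₂`. -/
structure IsSourceChain (G : RegionGraph n) (a b : Fin n) (i : Fin 3) (P₁ P₂ : G.V) : Prop where
  left : G.Lambda {a} = {G.S i, P₁}
  right : G.Lambda {b} = {P₁, P₂}
  ne_source : P₂ ≠ G.S i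

namespace IsSourceChain

variable {a b c : Fin n} {i k m : Fin 3} {P₁ P₂ : G.V}

lemma mem_plane (h : G.IsSourceChain a b i P₁ P₂) (hA : G.Assumption1)
    (hTS : G.TerminalSeparable) : P₁ ∈ G.plane i := by
  have hP₁ : P₁ ∈ G.Lambda {a} := h.left ▸ .inr rfl
  exact (skew_of_Lambda_eq_pair hA hTS h.left).mem_plane_of_source_left hP₁.1

lemma left_ne_source (h : G.IsSourceChain a b i P₁ P₂) (hA : G.Assumption1)
    (hTS : G.TerminalSeparable) (l : Fin 3) : P₁ ≠ G.S l :=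
  (skew_of_Lambda_eq_pair hA hTS h.left).ne_source_right l

lemma right_ne_source (h : G.IsSourceChain a b i P₁ P₂) (hA : G.Assumption1)
    (hTS : G.TerminalSeparable) (l : Fin 3) : P₂ ≠ G.S l := by
  rintro rfl
  have hskew := skew_of_Lambda_eq_pair hA hTS h.right
  obtain rfl := hskew.symm.eq_of_source_left (h.mem_plane hA hTS)
  exact h.ne_source rfl

lemma exists_mem_plane (h : G.IsSourceChain a b i P₁ P₂) (hA : G.Assumption1)
    (hTS : G.TerminalSeparable) : ∃ k ≠ i, P₂ ∈ G.plane k := by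
  have hP₂ : P₂ ∈ G.Lambda {b} := h.right ▸ .inr rfl
  refine (mem_bigPi_iff.1 hP₂.1).imp fun k hk ↦ ⟨?_, hk⟩
  rintro rfl
  exact skew_of_Lambda_eq_pair hA hTS h.right _ (h.mem_plane hA hTS) hk

lemma subset_bigPi (h : G.IsSourceChain a b i P₁ P₂) : {G.S i, P₁, P₂} ⊆ G.bigPi :=
  Set.insert_subset (source_mem_bigPi i) (h.right ▸ Lambda_subset_bigPi b)

lemma source_mem_iff (h : G.IsSourceChain a b i P₁ P₂) (hA : G.Assumption1)
    (hTS : G.TerminalSeparable) {l : Fin 3} :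
    G.S l ∈ ({G.S i, P₁, P₂} : Set G.V) ↔ l = i := by
  simp [G.S_inj.eq_iff, (h.left_ne_source hA hTS l).symm, (h.right_ne_source hA hTS l).symm]

lemma source_unique (h : G.IsSourceChain a b i P₁ P₂) (hA : G.Assumption1)
    (hTS : G.TerminalSeparable) (l l' : Fin 3) (hl : G.S l ∈ ({G.S i, P₁, P₂} : Set G.V))
    (hl' : G.S l' ∈ ({G.S i, P₁, P₂} : Set G.V)) : l = l' :=
  ((h.source_mem_iff hA hTS).1 hl).trans ((h.source_mem_iff hA hTS).1 hl').symm

lemma hasSkewPair (h : G.IsSourceChain a b i P₁ P₂) (hA : G.Assumption1)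
    (hTS : G.TerminalSeparable) {j : Fin n} (hj : j = a ∨ j = b) :
    G.HasSkewPair {G.S i, P₁, P₂} (G.Lambda {j}) := by
  rcases hj with rfl | rfl
  · exact hasSkewPair_of_Lambda_eq_pair hA hTS h.left (by simp) (by simp)
      fun l hl ↦ .inr ((h.source_mem_iff hA hTS).1 hl ▸ h.mem_plane hA hTS)
  · exact hasSkewPair_of_Lambda_eq_pair hA hTS h.right (by simp) (by simp)
      fun l hl ↦ .inl ((h.source_mem_iff hA hTS).1 hl ▸ h.mem_plane hA hTS)

lemma isMergeable (h : G.IsSourceChain a b i P₁ P₂) (hA : G.Assumption1)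
    (hTS : G.TerminalSeparable) : G.IsMergeable (G.planeClosure {G.S i, P₁, P₂}) :=
  isMergeable_planeClosure (h.source_unique hA hTS)

lemma links (h : G.IsSourceChain a b i P₁ P₂) (hA : G.Assumption1) (hTS : G.TerminalSeparable)
    {j : Fin n} (hj : j = a ∨ j = b) :
    G.Links (G.planeClosure {G.S i, P₁, P₂}) (G.Lambda {j}) :=
  (h.hasSkewPair hA hTS hj).links h.subset_bigPi (h.source_unique hA hTS)

lemma planeClosure_subset (h : G.IsSourceChain a b i P₁ P₂) (hA : G.Assumption1)
    (hTS : G.TerminalSeparable) :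
    G.planeClosure {G.S i, P₁, P₂} ⊆ insert P₁ (G.reg {G.S i, P₂}) := by
  refine Set.iUnion_subset fun l X hX ↦ ?_
  by_cases hl : P₁ ∈ G.plane l
  · obtain rfl := plane_unique (h.left_ne_source hA hTS) hl (h.mem_plane hA hTS)
    have hsub : {G.S l, P₁, P₂} ∩ G.plane l ⊆ {P₁} := by
      rintro _ ⟨rfl | rfl | rfl, hY⟩
      · simp at hY
      · rfl
      · exact absurd hY (skew_of_Lambda_eq_pair hA hTS h.right l hl)
    have := reg_mono hsub hX
    rw [reg_eq_of_subsingleton Set.subsingleton_singleton] at this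
    exact .inl this
  · refine .inr (reg_mono ?_ hX)
    rintro _ ⟨rfl | rfl | rfl, hY⟩
    exacts [.inl rfl, absurd hY hl, .inr rfl]

lemma mem_reg_and_mem_plane_of_skew (h : G.IsSourceChain a b i P₁ P₂) (hA : G.Assumption1)
    (hTS : G.TerminalSeparable) (hnf : ¬ G.Feasible) (hc : ∀ j ≠ c, j = a ∨ j = b)
    (hk : k ≠ i) (hP₂ : P₂ ∈ G.plane k) (hmi : m ≠ i) (hmk : m ≠ k) {X Y : G.V}
    (hX : X ∈ G.Lambda {c} ∩ G.planeClosure {G.S i, P₁, P₂}) (hY : Y ∈ G.Lambda {c})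
    (hXY : G.Skew X Y) : X ∈ G.reg {G.S i, P₂} ∧ Y ∈ G.plane m := by
  by_contra hU
  refine hnf (feasible_of_skew hA hTS h.subset_bigPi (h.source_unique hA hTS)
    (fun j hj ↦ h.hasSkewPair hA hTS (hc j hj)) hX hY hXY ?_ ?_) <;>
  simp only [h.source_mem_iff hA hTS, forall_eq]
  · rintro l rfl
    rcases h.planeClosure_subset hA hTS hX.2 with rfl | hXreg
    · exact (hXY.symm.eq_of_source_left (h.mem_plane hA hTS)).symm
    · obtain rfl := hXY.symm.eq_of_source_left (reg_source_pair_subset_plane hk hP₂ hXreg)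
      exact absurd ⟨hXreg, source_mem_plane_iff.2 hmk.symm⟩ hU
  · rcases h.planeClosure_subset hA hTS hX.2 with rfl | hXreg
    · exact .inl (h.mem_plane hA hTS)
    · obtain ⟨l, hl⟩ := mem_bigPi_iff.1 hY.1
      have hlk : l ≠ k := fun e ↦ hXY k (reg_source_pair_subset_plane hk hP₂ hXreg) (e ▸ hl)
      have hlm : l ≠ m := fun e ↦ hU ⟨hXreg, e ▸ hl⟩
      obtain rfl : l = i := by omega
      exact .inr hl

lemma mem_reg_of_mem_Lambda (h : G.IsSourceChain a b i P₁ P₂) (hA : G.Assumption1)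
    (hTS : G.TerminalSeparable) (hnf : ¬ G.Feasible) (hc : ∀ j ≠ c, j = a ∨ j = b)
    (hk : k ≠ i) (hP₂ : P₂ ∈ G.plane k) (hmi : m ≠ i) (hmk : m ≠ k) {X : G.V}
    (hX : X ∈ G.Lambda {c}) (hXC : X ∈ G.planeClosure {G.S i, P₁, P₂}) :
    X ∈ G.reg {G.S i, P₂} := by
  refine (h.planeClosure_subset hA hTS hXC).elim ?_ id
  rintro rfl
  obtain ⟨Y, hY, hYi⟩ := Set.not_subset.1 (not_Lambda_subset_plane hA hTS c i)
  exact (h.mem_reg_and_mem_plane_of_skew hA hTS hnf hc hk hP₂ hmi hmk ⟨hX, hXC⟩ hY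
    (skew_of_not_source (h.left_ne_source hA hTS) (h.mem_plane hA hTS) hYi)).1

theorem Lambda_subset (h : G.IsSourceChain a b i P₁ P₂) (hA : G.Assumption1)
    (hTS : G.TerminalSeparable) (hnf : ¬ G.Feasible) (hc : ∀ j ≠ c, j = a ∨ j = b)
    (hk : k ≠ i) (hP₂ : P₂ ∈ G.plane k) (hmi : m ≠ i) (hmk : m ≠ k) :
    G.Lambda {c} ⊆ G.reg {G.S i, P₂} ∪ G.plane m := by
  intro V hV
  by_contra hVU
  set C := G.planeClosure {G.S i, P₁, P₂}
  have hC : G.IsMergeable C := h.isMergeable hA hTS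
  have hlinks : ∀ j ≠ c, G.Links C (G.Lambda {j}) := fun j hj ↦ h.links hA hTS (hc j hj)
  have hskew : ∀ X ∈ G.Lambda {c} ∩ C, ∀ Y ∈ G.Lambda {c}, G.Skew X Y →
      X ∈ G.reg {G.S i, P₂} ∧ Y ∈ G.plane m := fun X hX Y hY ↦
    h.mem_reg_and_mem_plane_of_skew hA hTS hnf hc hk hP₂ hmi hmk hX hY
  have hCreg : ∀ X ∈ G.Lambda {c}, X ∈ C → X ∈ G.reg {G.S i, P₂} := fun X ↦
    h.mem_reg_of_mem_Lambda hA hTS hnf hc hk hP₂ hmi hmk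
  by_cases hpair : ∃ X Y, G.Lambda {c} = {X, Y}
  · obtain ⟨X, Y, hXY⟩ := hpair
    have hX : X ∈ G.Lambda {c} := hXY ▸ .inl rfl
    have hY : Y ∈ G.Lambda {c} := hXY ▸ .inr rfl
    have hXYskew := skew_of_Lambda_eq_pair hA hTS hXY
    refine hnf (feasible_of_links_of_pair hA hTS hC hlinks hXY (fun hXC ↦ ?_) fun hYC ↦ ?_)
    · obtain ⟨hXU, hYU⟩ := hskew X ⟨hX, hXC⟩ Y hY hXYskew
      rcases hXY ▸ hV with rfl | rfl
      exacts [hVU (.inl hXU), hVU (.inr hYU)]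
    · obtain ⟨hYU, hXU⟩ := hskew Y ⟨hY, hYC⟩ X hX hXYskew.symm
      rcases hXY ▸ hV with rfl | rfl
      exacts [hVU (.inr hXU), hVU (.inl hYU)]
  · refine hnf (feasible_of_links_of_subset_source hA hTS hC hlinks
      (fun X Y e ↦ hpair ⟨X, Y, e⟩) fun X hX ↦ ?_)
    by_contra! hXs
    have hXk := reg_source_pair_subset_plane hk hP₂ (hCreg X hX.1 hX.2)
    obtain ⟨W, hW, hWk⟩ := Set.not_subset.1 (not_Lambda_subset_plane hA hTS c k)
    have hVk : V ∈ G.plane k := by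
      by_contra hVk
      exact hVU (.inr (hskew X hX V hV (skew_of_not_source hXs hXk hVk)).2)
    exact hnf (feasible_of_links_of_coplanar hA hTS hC hlinks hX
      ⟨hV, fun hVC ↦ hVU (.inl (hCreg V hV hVC))⟩
      ⟨hW, fun hWC ↦ hWk (reg_source_pair_subset_plane hk hP₂ (hCreg W hW hWC))⟩ hXk hVk hWk)

end IsSourceChain

section SharedVertex

variable {D : Set G.V} {a b c : Fin n} {p r : Fin 3} {P Q R : G.V}

lemma triple_subset_bigPi (ha : G.Lambda {a} = {Q, P}) (hb : G.Lambda {b} = {Q, R}) :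
    {Q, P, R} ⊆ G.bigPi :=
  Set.insert_subset (Lambda_subset_bigPi a (ha ▸ .inl rfl))
    (Set.pair_subset (Lambda_subset_bigPi a (ha ▸ .inr rfl))
      (Lambda_subset_bigPi b (hb ▸ .inr rfl)))

lemma hasSkewPair_of_triple_subset (hA : G.Assumption1) (hTS : G.TerminalSeparable)
    (hc : ∀ j ≠ c, j = a ∨ j = b) (ha : G.Lambda {a} = {Q, P}) (hb : G.Lambda {b} = {Q, R})
    (hD : {Q, P, R} ⊆ D)
    (hs : ∀ i, G.S i ∈ D → Q ∈ G.plane i ∨ P ∈ G.plane i ∧ R ∈ G.plane i)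
    (j : Fin n) (hj : j ≠ c) : G.HasSkewPair D (G.Lambda {j}) := by
  have hQ : Q ∈ D := hD (by simp)
  have hP : P ∈ D := hD (by simp)
  have hR : R ∈ D := hD (by simp)
  rcases hc j hj with rfl | rfl
  · exact hasSkewPair_of_Lambda_eq_pair hA hTS ha hQ hP fun i hi ↦ (hs i hi).imp_right And.left
  · exact hasSkewPair_of_Lambda_eq_pair hA hTS hb hQ hR fun i hi ↦ (hs i hi).imp_right And.right

lemma planeClosure_source_triple_subset (hP : G.Skew (G.S r) P) (hR : G.Skew (G.S r) R) :
    G.planeClosure {G.S r, P, R} ⊆ insert (G.S r) (G.plane r) := by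
  refine Set.iUnion_subset fun k X hX ↦ ?_
  by_cases hk : k = r
  · exact .inr (reg_subset_plane Set.inter_subset_right (hk ▸ hX))
  · have hsub : {G.S r, P, R} ∩ G.plane k ⊆ {G.S r} := by
      rintro _ ⟨rfl | rfl | rfl, hY⟩
      exacts [rfl, absurd (hP.eq_of_source_left hY) hk, absurd (hR.eq_of_source_left hY) hk]
    have hXreg := reg_mono hsub hX
    rw [reg_eq_of_subsingleton Set.subsingleton_singleton] at hXreg
    exact .inl hXreg

theorem feasible_of_pairs_share_source (hA : G.Assumption1) (hTS : G.TerminalSeparable)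
    (hc : ∀ j ≠ c, j = a ∨ j = b) (ha : G.Lambda {a} = {G.S r, P})
    (hb : G.Lambda {b} = {G.S r, R}) : G.Feasible := by
  have hPskew := skew_of_Lambda_eq_pair hA hTS ha
  have hRskew := skew_of_Lambda_eq_pair hA hTS hb
  have hsource : ∀ i, G.S i ∈ ({G.S r, P, R} : Set G.V) ↔ i = r := fun i ↦ by
    simp [G.S_inj.eq_iff, (hPskew.ne_source_right i).symm, (hRskew.ne_source_right i).symm]
  have hD := triple_subset_bigPi ha hb
  have hP : P ∈ G.plane r := hPskew.mem_plane_of_source_left (hD (by simp))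
  have hR : R ∈ G.plane r := hRskew.mem_plane_of_source_left (hD (by simp))
  refine feasible_of_hasSkewPair hA hTS hD
    (fun i j hi hj ↦ ((hsource i).1 hi).trans ((hsource j).1 hj).symm)
    (hasSkewPair_of_triple_subset hA hTS hc ha hb subset_rfl fun i hi ↦ ?_)
    fun X hX Y hY hXY ↦ ?_
  · rw [(hsource i).1 hi]
    exact .inr ⟨hP, hR⟩
  · simp only [hsource, forall_eq]
    rcases planeClosure_source_triple_subset hPskew hRskew hX.2 with rfl | hXr
    · exact ⟨fun i hi ↦ absurd hi (hXY.ne_source_right i),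
        .inr (hXY.mem_plane_of_source_left hY.1)⟩
    · refine ⟨?_, .inl hXr⟩
      rintro i rfl
      exact (hXY.symm.eq_of_source_left hXr).symm

lemma source_notMem_triple (hQ : ∀ i, Q ≠ G.S i) (hP : ∀ i, P ≠ G.S i) (hR : ∀ i, R ≠ G.S i)
    (i : Fin 3) : G.S i ∉ ({Q, P, R} : Set G.V) := by
  simp [(hQ i).symm, (hP i).symm, (hR i).symm]

theorem feasible_of_pairs_coplanar (hA : G.Assumption1) (hTS : G.TerminalSeparable)
    (hc : ∀ j ≠ c, j = a ∨ j = b) (ha : G.Lambda {a} = {Q, P}) (hb : G.Lambda {b} = {Q, R})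
    (hQs : ∀ i, Q ≠ G.S i) (hPs : ∀ i, P ≠ G.S i) (hRs : ∀ i, R ≠ G.S i)
    (hP : P ∈ G.plane p) (hR : R ∈ G.plane p) : G.Feasible := by
  have hD := triple_subset_bigPi ha hb
  have hsource := source_notMem_triple hQs hPs hRs
  by_cases hS : ∃ X ∈ G.Lambda {c} ∩ G.planeClosure {Q, P, R}, ∃ s, G.S s ∈ G.Lambda {c} ∧
      G.Skew X (G.S s)
  · obtain ⟨X, hX, s, hsΛ, hXs⟩ := hS
    have hXplane : X ∈ G.plane s := hXs.symm.mem_plane_of_source_left hX.1.1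
    have hsource' : ∀ i, G.S i ∈ insert (G.S s) ({Q, P, R} : Set G.V) → i = s := fun i hi ↦
      G.S_inj (hi.resolve_right (hsource i))
    have hplane : Q ∈ G.plane s ∨ P ∈ G.plane s ∧ R ∈ G.plane s := by
      obtain ⟨Y, rfl | rfl | rfl, hY⟩ := exists_mem_plane_of_mem_planeClosure hX.2 hXplane
      · exact .inl hY
      · exact .inr ⟨hY, plane_unique hPs hP hY ▸ hR⟩
      · exact .inr ⟨plane_unique hRs hR hY ▸ hP, hY⟩
    exact feasible_of_skew hA hTS (Set.insert_subset (source_mem_bigPi s) hD)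
      (fun i j hi hj ↦ (hsource' i hi).trans (hsource' j hj).symm)
      (hasSkewPair_of_triple_subset hA hTS hc ha hb (Set.subset_insert _ _)
        fun i hi ↦ hsource' i hi ▸ hplane)
      ⟨hX.1, planeClosure_mono (Set.subset_insert _ _) hX.2⟩ hsΛ hXs
      (fun i hi ↦ hi ▸ .inl rfl) fun i hi ↦ .inl (hsource' i hi ▸ hXplane)
  · refine feasible_of_hasSkewPair hA hTS hD (fun i _ hi ↦ absurd hi (hsource i))
      (hasSkewPair_of_triple_subset hA hTS hc ha hb subset_rfl
        fun i hi ↦ absurd hi (hsource i)) fun X hX Y hY hXY ↦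
      ⟨?_, fun i hi ↦ absurd hi (hsource i)⟩
    rintro i rfl
    exact absurd ⟨X, hX, i, hY, hXY⟩ hS

lemma triple_inter_plane_subsingleton (hQP : G.Skew Q P) (hQR : G.Skew Q R) (hPR : G.Skew P R)
    (k : Fin 3) : ({Q, P, R} ∩ G.plane k).Subsingleton := by
  rintro A ⟨rfl | rfl | rfl, hA⟩ B ⟨rfl | rfl | rfl, hB⟩
  exacts [rfl, absurd hB (hQP k hA), absurd hB (hQR k hA), absurd hA (hQP k hB), rfl,
    absurd hB (hPR k hA), absurd hA (hQR k hB), absurd hA (hPR k hB), rfl]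

theorem feasible_of_pairs_not_coplanar (hA : G.Assumption1) (hTS : G.TerminalSeparable)
    (hnc : ∀ a b i P₁ P₂, ¬ G.IsSourceChain a b i P₁ P₂) (hc : ∀ j ≠ c, j = a ∨ j = b)
    (ha : G.Lambda {a} = {Q, P}) (hb : G.Lambda {b} = {Q, R})
    (hQs : ∀ i, Q ≠ G.S i) (hPs : ∀ i, P ≠ G.S i) (hRs : ∀ i, R ≠ G.S i)
    (hP : P ∈ G.plane p) (hR : R ∉ G.plane p) : G.Feasible := by
  have hPR : G.Skew P R := skew_of_not_source hPs hP hR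
  have hQP := skew_of_Lambda_eq_pair hA hTS ha
  have hQR := skew_of_Lambda_eq_pair hA hTS hb
  have hD := triple_subset_bigPi ha hb
  have hsource := source_notMem_triple hQs hPs hRs
  have hsub : ∀ k, ({Q, P, R} ∩ G.plane k).Subsingleton :=
    triple_inter_plane_subsingleton hQP hQR hPR
  have hclosure := (isMergeable_of_subsingleton hsub).planeClosure_eq hD
  have hs : ∀ i j, G.S i ∈ ({Q, P, R} : Set G.V) → G.S j ∈ ({Q, P, R} : Set G.V) → i = j :=
    fun i _ hi ↦ absurd hi (hsource i)
  have hpair := hasSkewPair_of_triple_subset hA hTS hc ha hb subset_rfl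
    fun i hi ↦ absurd hi (hsource i)
  by_cases hΛ : ∃ X Y, G.Lambda {c} = {X, Y}
  · refine feasible_of_hasSkewPair hA hTS hD hs hpair fun X hX Y hY hXY ↦
      ⟨?_, fun i hi ↦ absurd hi (hsource i)⟩
    rintro i rfl
    have hcX : G.Lambda {c} = {G.S i, X} := by
      obtain ⟨Z, W, hZW⟩ := hΛ
      have hXS : X ≠ G.S i := hXY.symm.ne_source_right i
      have hX' := hZW ▸ hX.1
      have hY' := hZW ▸ hY
      rw [hZW]
      grind
    rcases (hclosure ▸ hX.2 : X ∈ ({Q, P, R} : Set G.V)) with rfl | rfl | rfl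
    · exact absurd ⟨hcX, ha, hPs i⟩ (hnc c a i X P)
    · exact absurd ⟨hcX, ha.trans (Set.pair_comm _ _), hQs i⟩ (hnc c a i X Q)
    · exact absurd ⟨hcX, hb.trans (Set.pair_comm _ _), hQs i⟩ (hnc c b i X Q)
  · push Not at hΛ
    exact feasible_of_links_of_ne_pair hA hTS (isMergeable_of_subsingleton hsub)
      (fun j hj ↦ hclosure ▸ (hpair j hj).links hD hs) hΛ
      (fun k X hX Y hY ↦ hsub k ⟨hX.1.2, hX.2⟩ ⟨hY.1.2, hY.2⟩)
      fun _ _ _ i hi ↦ absurd hi (hsource i)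

theorem feasible_of_pairs_share (hA : G.Assumption1) (hTS : G.TerminalSeparable)
    (hnc : ∀ a b i P₁ P₂, ¬ G.IsSourceChain a b i P₁ P₂) (hc : ∀ j ≠ c, j = a ∨ j = b)
    (ha : G.Lambda {a} = {Q, P}) (hb : G.Lambda {b} = {Q, R}) (hPR : P ≠ R) : G.Feasible := by
  by_cases hQs : ∃ r, Q = G.S r
  · obtain ⟨r, rfl⟩ := hQs
    exact feasible_of_pairs_share_source hA hTS hc ha hb
  push Not at hQs
  have hPs : ∀ i, P ≠ G.S i := by
    rintro i rfl
    exact hnc a b i Q R ⟨ha.trans (Set.pair_comm _ _), hb, hPR.symm⟩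
  have hRs : ∀ i, R ≠ G.S i := by
    rintro i rfl
    exact hnc b a i Q P ⟨hb.trans (Set.pair_comm _ _), ha, hPR⟩
  obtain ⟨p, hP⟩ := mem_bigPi_iff.1 (triple_subset_bigPi ha hb (by simp : P ∈ _))
  by_cases hR : R ∈ G.plane p
  · exact feasible_of_pairs_coplanar hA hTS hc ha hb hQs hPs hRs hP hR
  · exact feasible_of_pairs_not_coplanar hA hTS hnc hc ha hb hQs hPs hRs hP hR

end SharedVertex

section ThreeTerminals

variable {G : RegionGraph 3}

theorem IsSourceChain.cir {a b : Fin 3} {i : Fin 3} {P₁ P₂ : G.V}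
    (h : G.IsSourceChain a b i P₁ P₂) (hA : G.Assumption1) (hTS : G.TerminalSeparable)
    (hnf : ¬ G.Feasible) : G.CIR := by
  obtain ⟨k, hki, hk⟩ := h.exists_mem_plane hA hTS
  obtain ⟨m, hmi, hmk⟩ := Fin.exists_ne_and_ne_of_two_lt i k (by norm_num)
  obtain ⟨c, hca, hcb⟩ := Fin.exists_ne_and_ne_of_two_lt a b (by norm_num)
  have hab : a ≠ b := by
    rintro rfl
    have hi : G.S i ∈ ({P₁, P₂} : Set G.V) := h.right ▸ h.left ▸ .inl rfl
    exact hi.elim (h.left_ne_source hA hTS i).symm h.ne_source.symm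
  obtain ⟨σ, hσ₀, hσ₁, hσ₂⟩ := exists_perm_fin_three hmi.symm hki.symm hmk
  obtain ⟨τ, hτ₀, hτ₁, hτ₂⟩ := exists_perm_fin_three hab hca.symm hcb.symm
  refine ⟨σ, τ, P₁, P₂, ?_, ?_, hτ₀ ▸ hσ₀ ▸ h.left, hτ₁ ▸ h.right, ?_⟩
  · rw [hσ₁, hσ₂]
    exact ⟨(regPair_eq_plane hmi hki hmk).symm.subset (h.mem_plane hA hTS), by
      simp [h.left_ne_source hA hTS]⟩
  · rw [hσ₀, hσ₁]
    exact ⟨(regPair_eq_plane hki.symm hmk hmi.symm).symm.subset hk, by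
      simp [h.right_ne_source hA hTS]⟩
  · have hm : G.reg {G.S i, G.S k} = G.plane m := regPair_eq_plane hmi.symm hmk.symm hki.symm
    rw [hτ₂, hσ₀, hσ₂, hm]
    exact h.Lambda_subset hA hTS hnf (fun j hj ↦ by omega) hki hk hmi hmk

end ThreeTerminals

end RegionGraph

/-- If a terminal-separable region graph with exactly three terminals
(satisfying Assumption 1) is not feasible, then condition (C-IR) holds. -/
theorem not_feasible_implies_CIR (G : RegionGraph 3)
    (hA : G.Assumption1) (hTS : G.TerminalSeparable)
    (hnf : ¬ G.Feasible) :
    G.CIR := by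
  by_contra hCIR
  have hnc : ∀ a b i P₁ P₂, ¬ G.IsSourceChain a b i P₁ P₂ := fun a b i P₁ P₂ h ↦
    hCIR (h.cir hA hTS hnf)
  refine hnf (RegionGraph.feasible_of_pairs_disjoint hA hTS ?_)
  rintro _ ⟨⟨X, Y, rfl⟩, a, ha⟩ _ ⟨⟨X', Y', rfl⟩, b, hb⟩ hne
  by_contra hdisj
  obtain ⟨Q, P, R, hP, hR, hPR⟩ := exists_pairs_eq_of_not_disjoint hne hdisj
  have hab : a ≠ b := fun h ↦ hne (ha.symm.trans (h ▸ hb))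
  obtain ⟨c, hca, hcb⟩ := Fin.exists_ne_and_ne_of_two_lt a b (by norm_num)
  exact hnf (RegionGraph.feasible_of_pairs_share hA hTS hnc (c := c) (fun j hj ↦ by omega)
    (ha.trans hP) (hb.trans hR) hPR)

end SumNetworksPaper
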